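/- arXiv:1707.00518 — 3 statements merged into one kernel-verified Lean document; each statement's English description precedes it below -/
import Mathlib

section
/- Lagrangian flux representation for compressible flows (donating region theorem, parametrized form). Let n ≥ 2, let v : ℝ × ℝⁿ → ℝⁿ be a C¹ time-dependent vector field with a jointly C¹ two-parameter flow φ, and let ρ : ℝ × ℝⁿ → ℝ be a C¹ solution of the conservation law ∂_tρ + div_x(ρ v) = 0. Let K ⊂ ℝ^{n−1} be compact and measurable, γ : ℝ^{n−1} → ℝⁿ a C¹ map injective on K, and ν : ℝ^{n−1} → ℝⁿ a continuous unit normal field along γ, i.e. ‖ν(s)‖ = 1, ⟨ν(s), ∂_iγ(s)⟩ = 0 for i = 1,…,n−1, and det[ν(s), ∂_1γ(s), …, ∂_{n−1}γ(s)] > 0 for all s ∈ K (so this determinant equals the surface area element of the hypersurface C = γ(K), and ν prescribes the direction of positive flux). Fix τ > 0 and define the crossing map Ψ : K × [0,τ] → ℝⁿ by Ψ(s,t) = φ_t^0(γ(s)) (the time-0 position of the particle occupying γ(s) at time t). Assume that for Lebesgue-a.e. p ∈ ℝⁿ the fiber Ψ^{−1}({p}) is finite and consists only of points at which the n×n Jacobian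 DΨ (in the variables (s,t)) is invertible, define deg(Ψ,p) := Σ_{(s,t) ∈ Ψ^{−1}({p})} sgn det DΨ(s,t), and assume p ↦ ρ(0,p)·deg(Ψ,p) is Lebesgue integrable on ℝⁿ and (s,t) ↦ ρ(t,γ(s))⟨v(t,γ(s)),ν(s)⟩det[ν(s),∂_1γ(s),…,∂_{n−1}γ(s)] is integrable on K × [0,τ]. Then ∫_0^τ ∫_K ρ(t,γ(s)) ⟨v(t,γ(s)), ν(s)⟩ det[ν(s), ∂_1γ(s), …, ∂_{n−1}γ(s)] ds dt = (−1)ⁿ ∫_{ℝⁿ} ρ(0,p) · deg(Ψ,p) dp. -/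
open MeasureTheory
open scoped RealInnerProductSpace

/-!
Mass is conserved along particle paths, i.e. `ρ_t (φ_a^t x) · det D(φ_a^t)(x) = ρ_a x`. The time
derivative of the crossing map `Ψ (s, t) = φ_t^0 (γ s)` is `-D(φ_t^0) v`, and only the normal part
of `v` contributes to a determinant whose other columns are tangent to the hypersurface. Hence
`ρ_0(Ψ) · det DΨ` is, up to the sign `(-1)ⁿ`, the flux density `ρ ⟨v, ν⟩ det[ν, Dγ]`. Integrating
it over the parameters gives `∫ ρ_0 · deg Ψ` by the signed area formula: the critical points of `Ψ`
have a null image, and the regular ones split into countably many pieces on which `Ψ` is injective,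
where the change of variables formula applies.
-/

section JacobiFormula

theorem hasDerivAt_matrix_det {𝕜 n : Type*} [NontriviallyNormedField 𝕜] [Fintype n]
    [DecidableEq n] {M : 𝕜 → Matrix n n 𝕜} {M' : Matrix n n 𝕜} {t : 𝕜}
    (hM : ∀ i j, HasDerivAt (fun s => M s i j) (M' i j) t) :
    HasDerivAt (fun s => (M s).det) ((M t).adjugate * M').trace t := by
  have hprod (σ : Equiv.Perm n) : HasDerivAt (fun s => ∏ i, M s (σ i) i)
      (∑ j, ∏ i, (M t).updateCol j (fun k => M' k j) (σ i) i) t := by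
    refine (HasDerivAt.fun_finsetProd fun i _ => hM (σ i) i).congr_deriv ?_
    refine Finset.sum_congr rfl fun j _ => ?_
    rw [← Finset.mul_prod_erase _ _ (Finset.mem_univ j), smul_eq_mul, mul_comm]
    congr 1
    · simp
    · refine Finset.prod_congr rfl fun i hi => ?_
      rw [Matrix.updateCol_ne (Finset.ne_of_mem_erase hi)]
  have hdet := HasDerivAt.fun_sum (u := Finset.univ) fun (σ : Equiv.Perm n) _ =>
    (hprod σ).const_smul (Equiv.Perm.sign σ)
  simp only [Matrix.det_apply]
  refine hdet.congr_deriv ?_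
  simp only [Finset.smul_sum]
  rw [Finset.sum_comm]
  simp only [← Matrix.det_apply, Matrix.trace, Matrix.diag_apply, Matrix.mul_apply_eq_vecMul]
  refine Finset.sum_congr rfl fun j _ => ?_
  rw [← Matrix.cramer_apply, Matrix.cramer_eq_adjugate_mulVec]
  rfl

theorem hasDerivAt_clm_det {𝕜 E : Type*} [NontriviallyNormedField 𝕜] [CompleteSpace 𝕜]
    [NormedAddCommGroup E] [NormedSpace 𝕜 E] [FiniteDimensional 𝕜 E]
    {M : 𝕜 → E →L[𝕜] E} {B : E →L[𝕜] E} {t : 𝕜} (hM : HasDerivAt M (B ∘L M t) t) :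
    HasDerivAt (fun s => (M s).det) (LinearMap.trace 𝕜 E B * (M t).det) t := by
  let b := Module.finBasis 𝕜 E
  have hentry (i j) : HasDerivAt (fun s => LinearMap.toMatrix b b (M s) i j)
      ((LinearMap.toMatrix b b B * LinearMap.toMatrix b b (M t)) i j) t := by
    rw [← LinearMap.toMatrix_comp]
    simp only [LinearMap.toMatrix_apply]
    exact ((b.coord i).toContinuousLinearMap.hasFDerivAt.comp_hasDerivAt t
      (hM.clm_apply (hasDerivAt_const t (b j)))).congr_deriv (by simp)
  have hdet := hasDerivAt_matrix_det hentry
  simp only [LinearMap.det_toMatrix] at hdet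
  refine hdet.congr_deriv ?_
  rw [Matrix.trace_mul_comm, Matrix.mul_assoc, Matrix.mul_adjugate, LinearMap.det_toMatrix,
    LinearMap.trace_eq_matrix_trace 𝕜 b]
  simp [mul_comm, ContinuousLinearMap.det]

end JacobiFormula

section TimeDependentMap

variable {E F : Type*} [NormedAddCommGroup E] [NormedSpace ℝ E] [NormedAddCommGroup F]
  [NormedSpace ℝ F]

theorem continuous_fderiv_snd {w : ℝ → E → F} (hw : ContDiff ℝ 1 fun q : ℝ × E => w q.1 q.2) :
    Continuous fun q : ℝ × E => fderiv ℝ (w q.1) q.2 :=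
  (ContDiff.fderiv (f := fun (q : ℝ × E) y => w q.1 y) (m := 1) (n := 0)
    (hw.comp ((contDiff_fst.comp contDiff_fst).prodMk contDiff_snd)) contDiff_snd
    (by simp)).continuous

theorem contDiff_of_uncurry {w : ℝ → E → F} (hw : ContDiff ℝ 1 fun q : ℝ × E => w q.1 q.2) (t : ℝ) :
    ContDiff ℝ 1 (w t) :=
  hw.comp (contDiff_const.prodMk contDiff_id)

theorem hasFDerivAt_uncurry {f : ℝ → E → F} {t : ℝ} {x : E}
    (hf : DifferentiableAt ℝ (fun q : ℝ × E => f q.1 q.2) (t, x)) :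
    HasFDerivAt (fun q : ℝ × E => f q.1 q.2)
      ((ContinuousLinearMap.toSpanSingleton ℝ (deriv (fun s => f s x) t)).coprod
        (fderiv ℝ (f t) x)) (t, x) := by
  have htime := hf.hasFDerivAt.comp t (hasFDerivAt_prodMk_left (𝕜 := ℝ) t x)
  have hspace := hf.hasFDerivAt.comp x (hasFDerivAt_prodMk_right (𝕜 := ℝ) t x)
  refine hf.hasFDerivAt.congr_fderiv (ContinuousLinearMap.prod_ext ?_ ?_)
  · rw [ContinuousLinearMap.coprod_comp_inl, toSpanSingleton_deriv]
    exact htime.fderiv.symm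
  · rw [ContinuousLinearMap.coprod_comp_inr]
    exact hspace.fderiv.symm

theorem hasDerivAt_comp_trajectory {f : ℝ → E → F} {c : ℝ → E} {c' : E} {t : ℝ}
    (hf : DifferentiableAt ℝ (fun q : ℝ × E => f q.1 q.2) (t, c t)) (hc : HasDerivAt c c' t) :
    HasDerivAt (fun s => f s (c s)) (deriv (fun s => f s (c t)) t + fderiv ℝ (f t) (c t) c') t := by
  refine (HasFDerivAt.comp_hasDerivAt (f := fun s => (s, c s)) t (hasFDerivAt_uncurry hf)
    ((hasDerivAt_id t).prodMk hc)).congr_deriv ?_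
  simp

variable [FiniteDimensional ℝ E]

theorem hasFDerivAt_intervalIntegral {w : ℝ → E → F}
    (hw : ContDiff ℝ 1 fun q : ℝ × E => w q.1 q.2) (a b : ℝ) (x : E) :
    HasFDerivAt (fun y => ∫ r in a..b, w r y) (∫ r in a..b, fderiv ℝ (w r) x) x := by
  have hslice (y : E) : Continuous fun r => w r y :=
    hw.continuous.comp (continuous_id.prodMk continuous_const)
  have hw' := continuous_fderiv_snd hw
  obtain ⟨C, hC⟩ := ((isCompact_uIcc (a := a) (b := b)).prod
    (isCompact_closedBall x 1)).exists_bound_of_continuousOn hw'.continuousOn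
  exact intervalIntegral.hasFDerivAt_integral_of_dominated_of_fderiv_le (bound := fun _ => C)
    (Metric.closedBall_mem_nhds x one_pos)
    (.of_forall fun y => (hslice y).aestronglyMeasurable) ((hslice x).intervalIntegrable _ _)
    (hw'.comp (continuous_id.prodMk continuous_const)).aestronglyMeasurable
    (.of_forall fun r hr y hy => hC (r, y) ⟨Set.uIoc_subset_uIcc hr, hy⟩)
    intervalIntegrable_const
    (.of_forall fun r _ y _ =>
      ((contDiff_of_uncurry hw r).differentiable one_ne_zero y).hasFDerivAt)

theorem hasDerivAt_fderiv_of_hasDerivAt [CompleteSpace F] {ψ w : ℝ → E → F}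
    (hw : ContDiff ℝ 1 fun q : ℝ × E => w q.1 q.2)
    (hψ : ∀ t x, HasDerivAt (fun s => ψ s x) (w t x) t) {x : E}
    (hx : DifferentiableAt ℝ (ψ 0) x) (t : ℝ) :
    HasDerivAt (fun s => fderiv ℝ (ψ s) x) (fderiv ℝ (w t) x) t := by
  -- Symmetry of second derivatives is not available: `ψ` is only `C¹` in `x`.
  have hftc (s : ℝ) : ψ s = fun y => ψ 0 y + ∫ r in (0 : ℝ)..s, w r y := by
    ext1 y
    rw [intervalIntegral.integral_eq_sub_of_hasDerivAt (fun r _ => hψ r y)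
      ((hw.continuous.comp (continuous_id.prodMk continuous_const)).intervalIntegrable _ _)]
    abel
  have hfderiv (s : ℝ) :
      fderiv ℝ (ψ s) x = fderiv ℝ (ψ 0) x + ∫ r in (0 : ℝ)..s, fderiv ℝ (w r) x := by
    rw [hftc s]
    exact (hx.hasFDerivAt.add (hasFDerivAt_intervalIntegral hw 0 s x)).fderiv
  have hcont : Continuous fun r => fderiv ℝ (w r) x :=
    (continuous_fderiv_snd hw).comp (continuous_id.prodMk continuous_const)
  rw [funext hfderiv]
  exact (hcont.integral_hasStrictDerivAt 0 t).hasDerivAt.const_add _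

end TimeDependentMap

section Flow

variable {E : Type*} [NormedAddCommGroup E] [NormedSpace ℝ E]

/-- A jointly `C¹` two-parameter flow of the time-dependent vector field `v`: `φ a b x` is the
position at time `b` of the particle that sits at `x` at time `a`. -/
structure IsC1Flow (v : ℝ → E → E) (φ : ℝ → ℝ → E → E) : Prop where
  contDiff : ContDiff ℝ 1 fun q : ℝ × ℝ × E => φ q.1 q.2.1 q.2.2
  map_self : ∀ a x, φ a a x = x
  hasDerivAt : ∀ a b x, HasDerivAt (fun s => φ a s x) (v b (φ a b x)) b
  map_map : ∀ a b c x, φ b c (φ a b x) = φ a c x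

/-- The divergence of a vector field, in the coordinate-free form `tr (Dw)`. -/
noncomputable def divergence (w : E → E) (x : E) : ℝ :=
  LinearMap.trace ℝ E (fderiv ℝ w x)

/-- The conservation law `∂ₜρ + div (ρ v) = 0`. -/
def IsConserved (v : ℝ → E → E) (ρ : ℝ → E → ℝ) : Prop :=
  ∀ t x, deriv (fun s => ρ s x) t + divergence (fun y => ρ t y • v t y) x = 0

theorem divergence_smul [FiniteDimensional ℝ E] {r : E → ℝ} {w : E → E} {x : E}
    (hr : DifferentiableAt ℝ r x) (hw : DifferentiableAt ℝ w x) :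
    divergence (fun y => r y • w y) x = r x * divergence w x + fderiv ℝ r x (w x) := by
  have htrace : LinearMap.trace ℝ E ((fderiv ℝ r x).smulRight (w x)) = fderiv ℝ r x (w x) :=
    LinearMap.trace_smulRight (fderiv ℝ r x : E →ₗ[ℝ] ℝ) (w x)
  rw [divergence, divergence, fderiv_fun_smul hr hw, ContinuousLinearMap.toLinearMap_add, map_add,
    htrace]
  simp

theorem divergence_euclideanSpace {ι : Type*} [Fintype ι] [DecidableEq ι]
    {w : EuclideanSpace ℝ ι → EuclideanSpace ℝ ι}
    {x : EuclideanSpace ℝ ι} (hw : DifferentiableAt ℝ w x) :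
    divergence w x = ∑ i, fderiv ℝ (fun y => w y i) x (EuclideanSpace.single i 1) := by
  rw [divergence, LinearMap.trace_eq_matrix_trace ℝ (EuclideanSpace.basisFun ι ℝ).toBasis,
    Matrix.trace]
  refine Finset.sum_congr rfl fun i _ => ?_
  have hcoord : HasFDerivAt (fun y => w y i) (EuclideanSpace.proj i ∘L fderiv ℝ w x) x :=
    (EuclideanSpace.proj (𝕜 := ℝ) i).hasFDerivAt.comp x hw.hasFDerivAt
  rw [hcoord.fderiv]
  simp [LinearMap.toMatrix_apply]

namespace IsC1Flow

variable {v : ℝ → E → E} {φ : ℝ → ℝ → E → E}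

theorem contDiff_time_space (h : IsC1Flow v φ) (a : ℝ) :
    ContDiff ℝ 1 fun q : ℝ × E => φ a q.1 q.2 :=
  h.contDiff.comp (contDiff_const.prodMk contDiff_id)

theorem contDiff_initialTime_space (h : IsC1Flow v φ) (b : ℝ) :
    ContDiff ℝ 1 fun q : ℝ × E => φ q.1 b q.2 :=
  h.contDiff.comp (contDiff_fst.prodMk (contDiff_const.prodMk contDiff_snd))

theorem differentiable (h : IsC1Flow v φ) (a b : ℝ) : Differentiable ℝ (φ a b) :=
  (contDiff_of_uncurry (h.contDiff_time_space a) b).differentiable one_ne_zero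

theorem hasDerivAt_initialTime (h : IsC1Flow v φ) (t b : ℝ) (x : E) :
    HasDerivAt (fun s => φ s b x) (-fderiv ℝ (φ t b) x (v t x)) t := by
  have hconst : HasDerivAt (fun s => φ s b (φ t s x))
      (deriv (fun s => φ s b x) t + fderiv ℝ (φ t b) x (v t x)) t := by
    simpa only [h.map_self] using
      hasDerivAt_comp_trajectory ((h.contDiff_initialTime_space b).differentiable one_ne_zero _)
        (h.hasDerivAt t t x)
  simp only [h.map_map] at hconst
  rw [← eq_neg_of_add_eq_zero_left (hconst.unique (hasDerivAt_const t _))]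
  exact (((h.contDiff_initialTime_space b).comp (contDiff_id.prodMk contDiff_const)).differentiable
    one_ne_zero t : DifferentiableAt ℝ (fun s => φ s b x) t).hasDerivAt

variable [FiniteDimensional ℝ E]

theorem hasDerivAt_fderiv (h : IsC1Flow v φ) (hv : ContDiff ℝ 1 fun q : ℝ × E => v q.1 q.2)
    (a t : ℝ) (x : E) :
    HasDerivAt (fun s => fderiv ℝ (φ a s) x)
      (fderiv ℝ (v t) (φ a t x) ∘L fderiv ℝ (φ a t) x) t := by
  rw [← fderiv_comp x ((contDiff_of_uncurry hv t).differentiable one_ne_zero _)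
    (h.differentiable a t x)]
  exact hasDerivAt_fderiv_of_hasDerivAt (w := fun s y => v s (φ a s y))
    (hv.comp (contDiff_fst.prodMk (h.contDiff_time_space a))) (h.hasDerivAt a)
    (h.differentiable a 0 x) t

theorem hasDerivAt_det_fderiv (h : IsC1Flow v φ)
    (hv : ContDiff ℝ 1 fun q : ℝ × E => v q.1 q.2) (a t : ℝ) (x : E) :
    HasDerivAt (fun s => (fderiv ℝ (φ a s) x).det)
      (divergence (v t) (φ a t x) * (fderiv ℝ (φ a t) x).det) t :=
  hasDerivAt_clm_det (h.hasDerivAt_fderiv hv a t x)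

theorem density_mul_det_fderiv (h : IsC1Flow v φ)
    (hv : ContDiff ℝ 1 fun q : ℝ × E => v q.1 q.2) {ρ : ℝ → E → ℝ}
    (hρ : ContDiff ℝ 1 fun q : ℝ × E => ρ q.1 q.2) (hcons : IsConserved v ρ) (a t : ℝ) (x : E) :
    ρ t (φ a t x) * (fderiv ℝ (φ a t) x).det = ρ a x := by
  have hderiv (t : ℝ) : HasDerivAt (fun t => ρ t (φ a t x) * (fderiv ℝ (φ a t) x).det) 0 t := by
    refine ((hasDerivAt_comp_trajectory (hρ.differentiable one_ne_zero _) (h.hasDerivAt a t x)).mul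
      (h.hasDerivAt_det_fderiv hv a t x)).congr_deriv ?_
    have hcons_t := hcons t (φ a t x)
    rw [divergence_smul ((contDiff_of_uncurry hρ t).differentiable one_ne_zero _)
      ((contDiff_of_uncurry hv t).differentiable one_ne_zero _)] at hcons_t
    linear_combination (fderiv ℝ (φ a t) x).det * hcons_t
  have hconst := is_const_of_deriv_eq_zero (fun t => (hderiv t).differentiableAt)
    (fun t => (hderiv t).deriv) t a
  have hid : φ a a = id := funext (h.map_self a)
  simpa [hid, ContinuousLinearMap.det] using hconst

end IsC1Flow

end Flow

section Determinant

theorem alternatingMap_snoc_eq_cons {R M N : Type*} [CommRing R] [AddCommGroup M] [Module R M]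
    [AddCommGroup N] [Module R N] {m : ℕ} (f : M [⋀^Fin (m + 1)]→ₗ[R] N) (u : Fin m → M) (w : M) :
    f (Fin.snoc u w) = (-1 : R) ^ m • f (Fin.cons w u) := by
  have h := f.map_perm (Fin.cons w u) (finRotate (m + 1))
  rw [sign_finRotate] at h
  rw [Fin.snoc_eq_cons_rotate]
  refine h.trans ?_
  rcases Nat.even_or_odd m with hm | hm <;> simp [hm.neg_one_pow]

variable {E : Type*} [NormedAddCommGroup E] [InnerProductSpace ℝ E]

theorem basis_det_eq_zero_of_forall_inner_eq_zero {ι : Type*} [Fintype ι] [DecidableEq ι]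
    (e : Module.Basis ι ℝ E) {ν : E} (hν : ν ≠ 0) {c : ι → E} (hc : ∀ i, ⟪ν, c i⟫ = 0) :
    e.det c = 0 := by
  by_contra hdet
  have hspan := (e.is_basis_iff_det.2 (isUnit_iff_ne_zero.2 hdet)).2
  have hperp : Submodule.span ℝ (Set.range c) ≤ (ℝ ∙ ν)ᗮ := Submodule.span_le.2 <|
    Set.range_subset_iff.2 fun i => Submodule.mem_orthogonal_singleton_iff_inner_right.2 (hc i)
  have hνν : ν ∈ (ℝ ∙ ν)ᗮ := hperp (hspan ▸ Submodule.mem_top)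
  exact hν (inner_self_eq_zero.1 (Submodule.mem_orthogonal_singleton_iff_inner_right.1 hνν))

theorem basis_det_cons_eq_inner_mul {m : ℕ} (e : Module.Basis (Fin (m + 1)) ℝ E) {ν : E}
    (hν : ‖ν‖ = 1) {u : Fin m → E} (hu : ∀ i, ⟪ν, u i⟫ = 0) (w : E) :
    e.det (Fin.cons w u) = ⟪w, ν⟫ * e.det (Fin.cons ν u) := by
  have htangential : e.det (Fin.cons (w - ⟪w, ν⟫ • ν) u) = 0 := by
    refine basis_det_eq_zero_of_forall_inner_eq_zero e (norm_ne_zero_iff.1 (hν ▸ one_ne_zero)) ?_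
    refine Fin.cases ?_ hu
    simp [inner_sub_right, inner_smul_right, hν, real_inner_comm]
  calc e.det (Fin.cons w u)
      = e.det (Fin.cons ((w - ⟪w, ν⟫ • ν) + ⟪w, ν⟫ • ν) u) := by rw [sub_add_cancel]
    _ = ⟪w, ν⟫ * e.det (Fin.cons ν u) := by
      rw [← AlternatingMap.coe_multilinearMap, MultilinearMap.cons_add, MultilinearMap.cons_smul,
        AlternatingMap.coe_multilinearMap, htangential, zero_add, smul_eq_mul]

theorem matrix_det_eq_basisFun_det {ι : Type*} [Fintype ι] [DecidableEq ι]
    (c : ι → EuclideanSpace ℝ ι) :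
    (Matrix.of fun i j => c j i).det = (EuclideanSpace.basisFun ι ℝ).toBasis.det c := by
  rw [Module.Basis.det_apply]
  rfl

end Determinant

section CrossingMap

variable {S E : Type*} [NormedAddCommGroup S] [NormedSpace ℝ S]

/-- The crossing map `Ψ (s, t) = φ_t^a (γ s)`: the position at the reference time `a` of the
particle that crosses the hypersurface `γ` at the parameter `s` and the time `t`. -/
def crossingMap (φ : ℝ → ℝ → E → E) (γ : S → E) (a : ℝ) (q : S × ℝ) : E :=
  φ q.2 a (γ q.1)

/-- The frame `(u₁, 0), …, (u_m, 0), (0, 1)` of the parameter space `S × ℝ` of a crossing map. -/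
def spaceTimeFrame {m : ℕ} (u : Fin m → S) : Fin (m + 1) → S × ℝ :=
  Fin.snoc (fun k => (u k, 0)) (0, 1)

variable [NormedAddCommGroup E]

section NormedSpace

variable [NormedSpace ℝ E] {v : ℝ → E → E} {φ : ℝ → ℝ → E → E} {γ : S → E}

theorem hasFDerivAt_crossingMap (h : IsC1Flow v φ) (a : ℝ) {q : S × ℝ}
    (hγ : DifferentiableAt ℝ γ q.1) :
    HasFDerivAt (crossingMap φ γ a) (fderiv ℝ (φ q.2 a) (γ q.1) ∘L
      (fderiv ℝ γ q.1).coprod (ContinuousLinearMap.toSpanSingleton ℝ (-v q.2 (γ q.1)))) q := by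
  have hφ := hasFDerivAt_uncurry (f := fun t x => φ t a x)
    ((h.contDiff_initialTime_space a).differentiable one_ne_zero (q.2, γ q.1))
  rw [(h.hasDerivAt_initialTime q.2 a (γ q.1)).deriv] at hφ
  refine (hφ.comp q (hasFDerivAt_snd.prodMk (hγ.hasFDerivAt.comp q hasFDerivAt_fst))).congr_fderiv
    (ContinuousLinearMap.prod_ext ?_ ?_) <;> ext <;> simp

theorem fderiv_crossingMap_snoc (h : IsC1Flow v φ) (a : ℝ) {q : S × ℝ}
    (hγ : DifferentiableAt ℝ γ q.1) {m : ℕ} (u : Fin m → S) :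
    (fderiv ℝ (crossingMap φ γ a) q ∘ spaceTimeFrame u) =
      Fin.snoc (fun k => fderiv ℝ (fun s => φ q.2 a (γ s)) q.1 (u k))
        (deriv (fun t => φ t a (γ q.1)) q.2) := by
  have hΨ := (hasFDerivAt_crossingMap h a hγ).differentiableAt.hasFDerivAt
  have hspace : HasFDerivAt (fun s => φ q.2 a (γ s)) _ q.1 :=
    HasFDerivAt.comp (g := crossingMap φ γ a) (f := fun s => (s, q.2)) q.1 hΨ
      (hasFDerivAt_prodMk_left q.1 q.2)
  have htime : HasDerivAt (fun t => φ t a (γ q.1)) _ q.2 :=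
    HasFDerivAt.comp_hasDerivAt (l := crossingMap φ γ a) (f := fun t => (q.1, t)) q.2 hΨ
      ((hasDerivAt_const q.2 q.1).prodMk (hasDerivAt_id q.2))
  rw [hspace.fderiv, htime.deriv]
  ext1 i
  refine Fin.lastCases ?_ (fun k => ?_) i <;> simp [spaceTimeFrame]

end NormedSpace

variable [InnerProductSpace ℝ E] {v : ℝ → E → E} {φ : ℝ → ℝ → E → E} {γ : S → E}

theorem det_fderiv_crossingMap (h : IsC1Flow v φ) (a : ℝ) {q : S × ℝ}
    (hγ : DifferentiableAt ℝ γ q.1) {ν : E} (hν : ‖ν‖ = 1) {m : ℕ} {u : Fin m → S}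
    (hu : ∀ k, ⟪ν, fderiv ℝ γ q.1 (u k)⟫ = 0) (e : Module.Basis (Fin (m + 1)) ℝ E) :
    e.det (fderiv ℝ (crossingMap φ γ a) q ∘ spaceTimeFrame u) =
      (-1) ^ (m + 1) * ((fderiv ℝ (φ q.2 a) (γ q.1)).det *
        (⟪v q.2 (γ q.1), ν⟫ * e.det (Fin.cons ν fun k => fderiv ℝ γ q.1 (u k)))) := by
  have hcols : (fderiv ℝ (crossingMap φ γ a) q ∘ spaceTimeFrame u) =
      fderiv ℝ (φ q.2 a) (γ q.1) ∘
        Fin.snoc (fun k => fderiv ℝ γ q.1 (u k)) (-v q.2 (γ q.1)) := by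
    rw [(hasFDerivAt_crossingMap h a hγ).fderiv]
    ext1 i
    refine Fin.lastCases ?_ (fun k => ?_) i <;> simp [spaceTimeFrame]
  rw [hcols, ← ContinuousLinearMap.coe_coe, Module.Basis.det_comp, alternatingMap_snoc_eq_cons,
    basis_det_cons_eq_inner_mul e hν hu, inner_neg_left, ContinuousLinearMap.det, smul_eq_mul]
  ring

theorem density_mul_det_fderiv_crossingMap [FiniteDimensional ℝ E] (h : IsC1Flow v φ)
    (hv : ContDiff ℝ 1 fun q : ℝ × E => v q.1 q.2) {ρ : ℝ → E → ℝ}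
    (hρ : ContDiff ℝ 1 fun q : ℝ × E => ρ q.1 q.2) (hcons : IsConserved v ρ) (a : ℝ) {q : S × ℝ}
    (hγ : DifferentiableAt ℝ γ q.1) {ν : E} (hν : ‖ν‖ = 1) {m : ℕ} {u : Fin m → S}
    (hu : ∀ k, ⟪ν, fderiv ℝ γ q.1 (u k)⟫ = 0) (e : Module.Basis (Fin (m + 1)) ℝ E) :
    ρ a (crossingMap φ γ a q) *
        e.det (fderiv ℝ (crossingMap φ γ a) q ∘ spaceTimeFrame u) =
      (-1) ^ (m + 1) * (ρ q.2 (γ q.1) * ⟪v q.2 (γ q.1), ν⟫ *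
        e.det (Fin.cons ν fun k => fderiv ℝ γ q.1 (u k))) := by
  rw [det_fderiv_crossingMap h a hγ hν hu,
    ← h.density_mul_det_fderiv hv hρ hcons q.2 a (γ q.1), crossingMap]
  ring

end CrossingMap

section FiberSum

variable {α β F : Type*} [AddCommMonoid F] [TopologicalSpace F] {f : α → β} {h : α → F}
  {s t : Set α} {p : β}

/-- The sum of the values of `h` over the part of the fibre `f ⁻¹' {p}` that lies in `s`, with the
convention of `∑'` that a sum which does not converge unconditionally is `0`. -/
noncomputable def fiberSum (f : α → β) (h : α → F) (s : Set α) (p : β) : F :=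
  ∑' x : ↥(s ∩ f ⁻¹' {p}), h x

theorem fiberSum_eq_of_notMem_image_diff (hts : t ⊆ s) (hp : p ∉ f '' (s \ t)) :
    fiberSum f h s p = fiberSum f h t p := by
  have hfiber : s ∩ f ⁻¹' {p} = t ∩ f ⁻¹' {p} := by
    refine Set.Subset.antisymm (fun x hx => ⟨?_, hx.2⟩) (Set.inter_subset_inter_left _ hts)
    by_contra hxt
    exact hp ⟨x, ⟨hx.1, hxt⟩, hx.2⟩
  rw [fiberSum, hfiber, fiberSum]

theorem fiberSum_of_notMem_image (hp : p ∉ f '' s) : fiberSum f h s p = 0 := by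
  rw [fiberSum_eq_of_notMem_image_diff (Set.empty_subset s) (by rwa [Set.sdiff_empty]), fiberSum,
    Set.empty_inter, tsum_empty]

theorem fiberSum_apply_of_injOn (hf : Set.InjOn f s) {x : α} (hx : x ∈ s) :
    fiberSum f h s (f x) = h x := by
  have hfiber : s ∩ f ⁻¹' {f x} = {x} := Set.Subset.antisymm
    (fun y hy => hf hy.1 hx hy.2) (Set.singleton_subset_iff.2 ⟨hx, rfl⟩)
  rw [fiberSum, hfiber, tsum_singleton]

theorem indicator_image_fiberSum : (f '' s).indicator (fiberSum f h s) = fiberSum f h s :=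
  Set.indicator_eq_self.2 (Function.support_subset_iff'.2 fun _ hp => fiberSum_of_notMem_image hp)

theorem norm_fiberSum_of_injOn {F : Type*} [NormedAddCommGroup F] {h : α → F}
    (hf : Set.InjOn f s) (p : β) : ‖fiberSum f h s p‖ = fiberSum f (fun x => ‖h x‖) s p := by
  by_cases hp : p ∈ f '' s
  · obtain ⟨x, hx, rfl⟩ := hp
    rw [fiberSum_apply_of_injOn hf hx, fiberSum_apply_of_injOn hf hx]
  · rw [fiberSum_of_notMem_image hp, fiberSum_of_notMem_image hp, norm_zero]

/-- Each piece meets the fibre in at most one point, so both sides are the same series up to zero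
terms. -/
theorem fiberSum_iUnion_of_injOn {ι : Type*} {P : ι → Set α}
    (hP : Pairwise (Function.onFun Disjoint P)) (hf : ∀ k, Set.InjOn f (P k)) (p : β) :
    fiberSum f h (⋃ k, P k) p = ∑' k, fiberSum f h (P k) p := by
  have hmem (x : ↥((⋃ k, P k) ∩ f ⁻¹' {p})) : ∃ k, x.1 ∈ P k := Set.mem_iUnion.1 x.2.1
  choose piece hpiece using hmem
  have hval (x) : fiberSum f h (P (piece x)) p = h x.1 := by
    have hx : f x = p := x.2.2
    simpa only [hx] using fiberSum_apply_of_injOn (h := h) (hf _) (hpiece x)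
  have hinj : Function.Injective piece := fun x y hxy =>
    Subtype.ext (hf _ (hpiece x) (hxy ▸ hpiece y) (x.2.2.trans y.2.2.symm))
  have hsupp : Function.support (fun k => fiberSum f h (P k) p) ⊆ Set.range piece := by
    refine Function.support_subset_iff'.2 fun k hk => fiberSum_of_notMem_image ?_
    rintro ⟨x, hx, hxp⟩
    refine hk ⟨⟨x, Set.mem_iUnion_of_mem k hx, hxp⟩, ?_⟩
    by_contra hne
    exact Set.disjoint_left.1 (hP hne) (hpiece _) hx
  rw [← hinj.tsum_eq hsupp, fiberSum]
  exact tsum_congr fun x => (hval x).symm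

end FiberSum

section AreaFormula

theorem integrable_tsum_of_summable_integral_norm {α ι F : Type*} [MeasurableSpace α]
    {μ : Measure α} [Countable ι] [NormedAddCommGroup F] [CompleteSpace F]
    {g : ι → α → F} (hg : ∀ i, Integrable (g i) μ) (hsum : Summable fun i => ∫ a, ‖g i a‖ ∂μ) :
    Integrable (fun a => ∑' i, g i a) μ := by
  have hfinite : ∑' i, ‖(hg i).toL1‖ₑ ≠ ⊤ := by
    simpa only [Integrable.enorm_toL1, ← ofReal_integral_norm_eq_lintegral_enorm (hg _)] using
      hsum.tsum_ofReal_ne_top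
  refine (L1.integrable_coeFn (∑' i, (hg i).toL1)).congr ((Lp.coeFn_tsum hfinite).trans ?_)
  filter_upwards [ae_all_iff.2 fun i => (hg i).coeFn_toL1] with a ha
  exact tsum_congr ha

variable {E F : Type*} [NormedAddCommGroup E] [NormedSpace ℝ E] [FiniteDimensional ℝ E]

theorem exists_injOn_of_approximatesLinearOn (A : E →L[ℝ] E) :
    ∃ r : NNReal, r ≠ 0 ∧
      (A.det ≠ 0 → ∀ (f : E → E) (t : Set E), ApproximatesLinearOn f A t r → Set.InjOn f t) := by
  by_cases hA : A.det = 0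
  · exact ⟨1, one_ne_zero, fun h => absurd hA h⟩
  obtain hE | hE := subsingleton_or_nontrivial E
  · exact ⟨1, one_ne_zero, fun _ _ _ _ => Set.injOn_of_subsingleton _ _⟩
  set L := A.toContinuousLinearEquivOfDetNeZero hA
  have hpos : 0 < ‖(L.symm : E →L[ℝ] E)‖₊⁻¹ := inv_pos.2 L.nnnorm_symm_pos
  refine ⟨‖(L.symm : E →L[ℝ] E)‖₊⁻¹ / 2, (half_pos hpos).ne', fun _ f t hft => ?_⟩
  rw [← ContinuousLinearMap.coe_toContinuousLinearEquivOfDetNeZero A hA] at hft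
  exact hft.injOn (Or.inr (NNReal.half_lt_self hpos.ne'))

variable [MeasurableSpace E] [BorelSpace E] {s : Set E} {f : E → E} {f' : E → E →L[ℝ] E}

theorem exists_measurable_partition_injOn (hs : MeasurableSet s)
    (hf' : ∀ x ∈ s, HasFDerivWithinAt f (f' x) s x) (hdet : ∀ x ∈ s, (f' x).det ≠ 0) :
    ∃ P : ℕ → Set E, Pairwise (Function.onFun Disjoint P) ∧ (∀ k, MeasurableSet (P k)) ∧
      (⋃ k, P k) = s ∧ ∀ k, Set.InjOn f (P k) := by
  rcases s.eq_empty_or_nonempty with rfl | hne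
  · exact ⟨fun _ => ∅, fun _ _ _ => by simp [Function.onFun], by simp, by simp, by simp⟩
  choose r hr_ne hr_inj using exists_injOn_of_approximatesLinearOn (E := E)
  obtain ⟨t, A, hdisj, hmeas, hcov, happ, hA⟩ :=
    exists_partition_approximatesLinearOn_of_hasFDerivWithinAt f s f' hf' r hr_ne
  refine ⟨fun k => s ∩ t k, fun i j hij => (hdisj hij).mono Set.inter_subset_right
    Set.inter_subset_right, fun k => hs.inter (hmeas k), ?_, fun k => ?_⟩
  · rw [← Set.inter_iUnion, Set.inter_eq_left.2 hcov]
  · obtain ⟨y, hy, hyA⟩ := hA hne k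
    exact hr_inj _ (hyA ▸ hdet y hy) _ _ (happ k)

variable (μ : Measure E) [μ.IsAddHaarMeasure]

theorem exists_measurable_subset_det_ne_zero (hs : MeasurableSet s)
    (hf' : ∀ x ∈ s, HasFDerivWithinAt f (f' x) s x) :
    ∃ t ⊆ s, MeasurableSet t ∧ (∀ x ∈ t, (f' x).det ≠ 0) ∧
      (∀ᵐ x ∂μ, x ∈ s \ t → (f' x).det = 0) ∧ μ (f '' (s \ t)) = 0 := by
  have hreg : NullMeasurableSet {x | (f' x).det ≠ 0} (μ.restrict s) :=
    (ContinuousLinearMap.continuous_det.measurable.comp_aemeasurable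
      (aemeasurable_fderivWithin μ hs hf')).nullMeasurable (measurableSet_singleton 0).compl
  obtain ⟨u, hu_sub, hu_meas, hu_ae⟩ := hreg.exists_measurable_subset_ae_eq
  set c := {x ∈ s \ u | (f' x).det = 0} with hc
  set d := {x ∈ s \ u | (f' x).det ≠ 0} with hd
  have hcd : s \ u = c ∪ d := by
    ext x
    simp only [hc, hd, Set.mem_union, Set.mem_ofPred_eq]
    tauto
  have hd_null : μ d = 0 := by
    have hae := (ae_restrict_iff' hs).1 hu_ae.mem_iff
    refine measure_mono_null (fun x hx => ?_) hae
    exact fun hiff => hx.1.2 ((hiff hx.1.1).2 hx.2)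
  have hsub {w : Set E} (hw : w ⊆ s) (x) (hx : x ∈ w) : HasFDerivWithinAt f (f' x) w x :=
    (hf' x (hw hx)).mono hw
  have hcs : c ⊆ s := fun x hx => hx.1.1
  have hds : d ⊆ s := fun x hx => hx.1.1
  refine ⟨s ∩ u, Set.inter_subset_left, hs.inter hu_meas, fun x hx => hu_sub hx.2, ?_, ?_⟩
  · rw [Set.sdiff_self_inter]
    filter_upwards [measure_eq_zero_iff_ae_notMem.1 hd_null] with x hxd hx
    by_contra hdet
    exact hxd ⟨hx, hdet⟩
  · rw [Set.sdiff_self_inter, hcd, Set.image_union, measure_union_null_iff]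
    exact ⟨addHaar_image_eq_zero_of_det_fderivWithin_eq_zero μ (hsub hcs) fun x hx => hx.2,
      addHaar_image_eq_zero_of_differentiableOn_of_addHaar_eq_zero μ
        (fun x hx => (hsub hds x hx).differentiableWithinAt) hd_null⟩

variable [NormedAddCommGroup F] [NormedSpace ℝ F] {h : E → F}

theorem integrable_fiberSum_iff_of_injOn (hs : MeasurableSet s)
    (hf' : ∀ x ∈ s, HasFDerivWithinAt f (f' x) s x) (hf : Set.InjOn f s) :
    Integrable (fiberSum f h s) μ ↔ IntegrableOn (fun x => |(f' x).det| • h x) s μ := by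
  rw [← indicator_image_fiberSum,
    integrable_indicator_iff (measurable_image_of_fderivWithin hs hf' hf),
    integrableOn_image_iff_integrableOn_abs_det_fderiv_smul μ hs hf' hf]
  exact integrableOn_congr_fun (fun x hx => by rw [fiberSum_apply_of_injOn hf hx]) hs

theorem integral_fiberSum_of_injOn (hs : MeasurableSet s)
    (hf' : ∀ x ∈ s, HasFDerivWithinAt f (f' x) s x) (hf : Set.InjOn f s) :
    ∫ p, fiberSum f h s p ∂μ = ∫ x in s, |(f' x).det| • h x ∂μ := by
  rw [← indicator_image_fiberSum, integral_indicator (measurable_image_of_fderivWithin hs hf' hf),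
    integral_image_eq_integral_abs_det_fderiv_smul μ hs hf' hf]
  exact setIntegral_congr_fun hs fun x hx => by rw [fiberSum_apply_of_injOn hf hx]

variable [CompleteSpace F]

theorem integral_fiberSum_of_det_ne_zero (hs : MeasurableSet s)
    (hf' : ∀ x ∈ s, HasFDerivWithinAt f (f' x) s x) (hdet : ∀ x ∈ s, (f' x).det ≠ 0)
    (hint : IntegrableOn (fun x => |(f' x).det| • h x) s μ) :
    Integrable (fiberSum f h s) μ ∧
      ∫ p, fiberSum f h s p ∂μ = ∫ x in s, |(f' x).det| • h x ∂μ := by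
  obtain ⟨P, hP_disj, hP_meas, rfl, hP_inj⟩ := exists_measurable_partition_injOn hs hf' hdet
  have hfP (k x) (hx : x ∈ P k) : HasFDerivWithinAt f (f' x) (P k) x :=
    (hf' x (Set.mem_iUnion_of_mem k hx)).mono (Set.subset_iUnion P k)
  have hintP (k) : Integrable (fiberSum f h (P k)) μ :=
    (integrable_fiberSum_iff_of_injOn μ (hP_meas k) (hfP k) (hP_inj k)).2
      (hint.mono_set (Set.subset_iUnion P k))
  have hnorm (k) : ∫ p, ‖fiberSum f h (P k) p‖ ∂μ = ∫ x in P k, ‖|(f' x).det| • h x‖ ∂μ := by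
    simp only [norm_fiberSum_of_injOn (hP_inj k), norm_smul, Real.norm_eq_abs, abs_abs]
    exact integral_fiberSum_of_injOn μ (hP_meas k) (hfP k) (hP_inj k)
  have hsummable : Summable fun k => ∫ p, ‖fiberSum f h (P k) p‖ ∂μ := by
    simpa only [hnorm] using (hasSum_integral_iUnion hP_meas hP_disj hint.norm).summable
  rw [funext (fiberSum_iUnion_of_injOn hP_disj hP_inj)]
  refine ⟨integrable_tsum_of_summable_integral_norm hintP hsummable, ?_⟩
  refine (hasSum_integral_of_summable_integral_norm hintP hsummable).unique ?_
  simpa only [integral_fiberSum_of_injOn μ (hP_meas _) (hfP _) (hP_inj _)] using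
    hasSum_integral_iUnion hP_meas hP_disj hint

theorem integral_fiberSum (hs : MeasurableSet s)
    (hf' : ∀ x ∈ s, HasFDerivWithinAt f (f' x) s x)
    (hint : IntegrableOn (fun x => |(f' x).det| • h x) s μ) :
    Integrable (fiberSum f h s) μ ∧
      ∫ p, fiberSum f h s p ∂μ = ∫ x in s, |(f' x).det| • h x ∂μ := by
  obtain ⟨t, hts, ht, hdet, hcrit, hnull⟩ := exists_measurable_subset_det_ne_zero μ hs hf'
  have hfiber : fiberSum f h t =ᵐ[μ] fiberSum f h s :=
    (measure_eq_zero_iff_ae_notMem.1 hnull).mono fun p hp =>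
      (fiberSum_eq_of_notMem_image_diff hts hp).symm
  have hst : ∫ x in t, |(f' x).det| • h x ∂μ = ∫ x in s, |(f' x).det| • h x ∂μ :=
    (setIntegral_eq_of_subset_of_ae_sdiff_eq_zero hs.nullMeasurableSet hts
      (hcrit.mono fun x hx hxst => by rw [hx hxst, abs_zero, zero_smul])).symm
  obtain ⟨hint_t, heq⟩ := integral_fiberSum_of_det_ne_zero μ ht
    (fun x hx => (hf' x (hts hx)).mono hts) hdet (hint.mono_set hts)
  exact ⟨hint_t.congr hfiber, by rw [← integral_congr_ae hfiber, heq, hst]⟩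

end AreaFormula

section SignedAreaFormula

theorem abs_mul_realSign (x : ℝ) : |x| * Real.sign x = x := by
  rcases lt_trichotomy x 0 with hx | rfl | hx
  · simp [Real.sign_of_neg hx, abs_of_neg hx]
  · simp
  · simp [Real.sign_of_pos hx, abs_of_pos hx]

/-- Real signs are bounded away from `0` on their support, so an infinite support makes both sides
the junk value `0`. -/
theorem tsum_realSign_eq_finsum {ι : Type*} (d : ι → ℝ) :
    ∑' i, Real.sign (d i) = ∑ᶠ i, Real.sign (d i) := by
  by_cases hfin : (Function.support fun i => Real.sign (d i)).Finite
  · exact tsum_eq_finsum hfin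
  · rw [finsum_of_infinite_support hfin, tsum_eq_zero_of_not_summable]
    intro hsum
    have hsmall := hsum.tendsto_cofinite_zero.eventually (Metric.ball_mem_nhds 0 one_pos)
    refine hfin ((Filter.eventually_cofinite.1 hsmall).subset fun i hi => ?_)
    rcases Real.sign_apply_eq_of_ne_zero (d i) (mt Real.sign_eq_zero_iff.2 hi) with hd | hd <;>
      simp [hd]

theorem fiberSum_mul_realSign {α β : Type*} (f : α → β) (g : β → ℝ) (d : α → ℝ) (s : Set α)
    (p : β) : fiberSum f (fun x => g (f x) * Real.sign (d x)) s p =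
      g p * ∑ᶠ x ∈ s ∩ f ⁻¹' {p}, Real.sign (d x) := by
  rw [← finsum_set_coe_eq_finsum_mem, ← tsum_realSign_eq_finsum, ← tsum_mul_left, fiberSum]
  refine tsum_congr fun x => ?_
  have hx : f x = p := x.2.2
  rw [hx]

variable {ι E F : Type*} [Fintype ι] [DecidableEq ι]
  [NormedAddCommGroup E] [NormedSpace ℝ E] [MeasurableSpace E] [BorelSpace E]
  [NormedAddCommGroup F] [NormedSpace ℝ F] [MeasurableSpace F] [BorelSpace F]

theorem integral_mul_det_eq_integral_mul_degree (b : Module.Basis ι ℝ E) (c : Module.Basis ι ℝ F)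
    {s : Set E} (hs : MeasurableSet s) {f : E → F} {f' : E → E →L[ℝ] F}
    (hf' : ∀ x ∈ s, HasFDerivWithinAt f (f' x) s x) (g : F → ℝ)
    (hint : IntegrableOn (fun x => g (f x) * c.det (f' x ∘ b)) s b.addHaar) :
    Integrable (fun p => g p * ∑ᶠ x ∈ s ∩ f ⁻¹' {p}, Real.sign (c.det (f' x ∘ b))) c.addHaar ∧
      ∫ p, g p * ∑ᶠ x ∈ s ∩ f ⁻¹' {p}, Real.sign (c.det (f' x ∘ b)) ∂c.addHaar =
        ∫ x in s, g (f x) * c.det (f' x ∘ b) ∂b.addHaar := by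
  have := b.finiteDimensional_of_finite
  have := c.finiteDimensional_of_finite
  obtain ⟨L, rfl⟩ : ∃ L : F ≃L[ℝ] E, c.map L.toLinearEquiv = b :=
    ⟨(c.equiv b (Equiv.refl ι)).toContinuousLinearEquiv, by ext i; simp⟩
  set b := c.map L.toLinearEquiv
  have hdet (x : E) : ((L : F →L[ℝ] E) ∘L f' x).det = c.det (f' x ∘ b) := by
    have hcomp := b.det_comp ((L : F →L[ℝ] E) ∘L f' x : E →L[ℝ] E) b
    rw [b.det_self, mul_one, c.det_map] at hcomp
    rw [ContinuousLinearMap.det, ← hcomp]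
    congr 1
    ext i
    simp
  have hfiber (p : F) : fiberSum (L ∘ f) (fun x => g (f x) * Real.sign (c.det (f' x ∘ b))) s (L p) =
      g p * ∑ᶠ x ∈ s ∩ f ⁻¹' {p}, Real.sign (c.det (f' x ∘ b)) := by
    rw [← fiberSum_mul_realSign, fiberSum, fiberSum, Set.preimage_comp,
      ← Set.image_singleton, L.injective.preimage_image]
  have hdensity (x : E) : |((L : F →L[ℝ] E) ∘L f' x).det| •
      (g (f x) * Real.sign (c.det (f' x ∘ b))) = g (f x) * c.det (f' x ∘ b) := by
    rw [hdet, smul_eq_mul, mul_left_comm, abs_mul_realSign]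
  have harea := integral_fiberSum b.addHaar hs
    (fun x hx => L.hasFDerivAt.comp_hasFDerivWithinAt x (hf' x hx))
    (h := fun x => g (f x) * Real.sign (c.det (f' x ∘ b))) (by simpa only [hdensity] using hint)
  have hL : MeasurePreserving L c.addHaar b.addHaar := ⟨L.continuous.measurable, c.map_addHaar L⟩
  have hL_emb : MeasurableEmbedding L := L.toHomeomorph.measurableEmbedding
  simp only [hdensity] at harea
  simp only [← hfiber]
  exact ⟨(hL.integrable_comp_emb hL_emb).2 harea.1, (hL.integral_comp hL_emb _).trans harea.2⟩

end SignedAreaFormula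

theorem setIntegral_prod_symm {α β F : Type*} [MeasurableSpace α] [MeasurableSpace β]
    [NormedAddCommGroup F] [NormedSpace ℝ F] {μ : Measure α} {ν : Measure β} [SFinite μ]
    [SFinite ν] {s : Set α} {t : Set β} (f : α × β → F)
    (hf : IntegrableOn f (s ×ˢ t) (μ.prod ν)) :
    ∫ z in s ×ˢ t, f z ∂μ.prod ν = ∫ y in t, ∫ x in s, f (x, y) ∂μ ∂ν := by
  simp only [← Measure.prod_restrict s t, IntegrableOn] at hf ⊢
  exact integral_prod_symm f hf

section Flux

variable {S : Type*} [NormedAddCommGroup S] [NormedSpace ℝ S] {m : ℕ}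

/-- The basis of `S × ℝ` whose vectors are those of `spaceTimeFrame u`. -/
noncomputable def spaceTimeBasis (u : Module.Basis (Fin m) ℝ S) :
    Module.Basis (Fin (m + 1)) ℝ (S × ℝ) :=
  (u.prod (OrthonormalBasis.singleton (Fin 1) ℝ).toBasis).reindex finSumFinEquiv

theorem coe_spaceTimeBasis (u : Module.Basis (Fin m) ℝ S) :
    ⇑(spaceTimeBasis u) = spaceTimeFrame u := by
  ext1 i
  rw [spaceTimeBasis, Module.Basis.reindex_apply, spaceTimeFrame]
  refine Fin.lastCases ?_ (fun k => ?_) i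
  · rw [finSumFinEquiv_symm_last, Fin.snoc_last]
    simp
  · rw [finSumFinEquiv_symm_apply_castSucc, Fin.snoc_castSucc]
    simp

variable [MeasurableSpace S] [BorelSpace S]

theorem addHaar_spaceTimeBasis (u : Module.Basis (Fin m) ℝ S) :
    (spaceTimeBasis u).addHaar = u.addHaar.prod volume := by
  rw [spaceTimeBasis, Module.Basis.addHaar_reindex, Module.Basis.prod_addHaar]
  exact congrArg _ (OrthonormalBasis.addHaar_eq_volume _)

variable {E : Type*} [NormedAddCommGroup E] [InnerProductSpace ℝ E] [MeasurableSpace E]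
  [BorelSpace E] {v : ℝ → E → E} {φ : ℝ → ℝ → E → E} {ρ : ℝ → E → ℝ} {γ ν : S → E}
  {Q : Set (S × ℝ)}

theorem integral_density_mul_degree_eq_integral_flux (u : Module.Basis (Fin m) ℝ S)
    (e : Module.Basis (Fin (m + 1)) ℝ E) (h : IsC1Flow v φ)
    (hv : ContDiff ℝ 1 fun q : ℝ × E => v q.1 q.2)
    (hρ : ContDiff ℝ 1 fun q : ℝ × E => ρ q.1 q.2) (hcons : IsConserved v ρ) (a : ℝ)
    (hQ : MeasurableSet Q) (hγ : ∀ q ∈ Q, DifferentiableAt ℝ γ q.1) (hν : ∀ q ∈ Q, ‖ν q.1‖ = 1)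
    (hperp : ∀ q ∈ Q, ∀ k, ⟪ν q.1, fderiv ℝ γ q.1 (u k)⟫ = 0)
    (hint : IntegrableOn (fun q : S × ℝ => ρ q.2 (γ q.1) * ⟪v q.2 (γ q.1), ν q.1⟫ *
      e.det (Fin.cons (ν q.1) fun k => fderiv ℝ γ q.1 (u k))) Q (u.addHaar.prod volume)) :
    Integrable (fun p => ρ a p * ∑ᶠ q ∈ Q ∩ crossingMap φ γ a ⁻¹' {p},
        Real.sign (e.det (fderiv ℝ (crossingMap φ γ a) q ∘ spaceTimeFrame u))) e.addHaar ∧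
      ∫ p, ρ a p * ∑ᶠ q ∈ Q ∩ crossingMap φ γ a ⁻¹' {p},
          Real.sign (e.det (fderiv ℝ (crossingMap φ γ a) q ∘ spaceTimeFrame u)) ∂e.addHaar =
        (-1) ^ (m + 1) * ∫ q in Q, ρ q.2 (γ q.1) * ⟪v q.2 (γ q.1), ν q.1⟫ *
          e.det (Fin.cons (ν q.1) fun k => fderiv ℝ γ q.1 (u k)) ∂(u.addHaar.prod volume) := by
  have := e.finiteDimensional_of_finite
  have hflux : Set.EqOn (fun q => ρ a (crossingMap φ γ a q) *
      e.det (fderiv ℝ (crossingMap φ γ a) q ∘ spaceTimeFrame u))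
      (fun q => (-1) ^ (m + 1) * (ρ q.2 (γ q.1) * ⟪v q.2 (γ q.1), ν q.1⟫ *
        e.det (Fin.cons (ν q.1) fun k => fderiv ℝ γ q.1 (u k)))) Q := fun q hq =>
    density_mul_det_fderiv_crossingMap h hv hρ hcons a (hγ q hq) (hν q hq) (hperp q hq) e
  rw [← integral_const_mul, ← setIntegral_congr_fun hQ hflux, ← addHaar_spaceTimeBasis u]
  rw [← addHaar_spaceTimeBasis u] at hint
  simp only [← coe_spaceTimeBasis u] at hflux ⊢
  exact integral_mul_det_eq_integral_mul_degree (spaceTimeBasis u) e hQ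
    (fun q hq =>
      (hasFDerivAt_crossingMap h a (hγ q hq)).differentiableAt.hasFDerivAt.hasFDerivWithinAt)
    (ρ a) ((integrableOn_congr_fun hflux hQ).2 (hint.const_mul _))

end Flux

theorem lagrangian_flux_representation_general (m : ℕ)
    (v : ℝ → EuclideanSpace ℝ (Fin (m + 1)) → EuclideanSpace ℝ (Fin (m + 1)))
    (hv : ContDiff ℝ 1 fun q : ℝ × EuclideanSpace ℝ (Fin (m + 1)) => v q.1 q.2)
    (φ : ℝ → ℝ → EuclideanSpace ℝ (Fin (m + 1)) → EuclideanSpace ℝ (Fin (m + 1)))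
    (hφ : IsC1Flow v φ)
    (ρ : ℝ → EuclideanSpace ℝ (Fin (m + 1)) → ℝ)
    (hρ : ContDiff ℝ 1 fun q : ℝ × EuclideanSpace ℝ (Fin (m + 1)) => ρ q.1 q.2)
    (hcons : ∀ t x, deriv (fun s => ρ s x) t
      + ∑ i : Fin (m + 1),
          fderiv ℝ (fun y => ρ t y * v t y i) x (EuclideanSpace.single i 1) = 0)
    (K : Set (EuclideanSpace ℝ (Fin m))) (hK : MeasurableSet K)
    (γ : EuclideanSpace ℝ (Fin m) → EuclideanSpace ℝ (Fin (m + 1)))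
    (hγ : ∀ s ∈ K, DifferentiableAt ℝ γ s)
    (ν : EuclideanSpace ℝ (Fin m) → EuclideanSpace ℝ (Fin (m + 1)))
    (hν : ∀ s ∈ K, ‖ν s‖ = 1)
    (hνperp : ∀ s ∈ K, ∀ i : Fin m, ⟪ν s, fderiv ℝ γ s (EuclideanSpace.single i 1)⟫ = 0)
    (A : EuclideanSpace ℝ (Fin m) → ℝ)
    (hA : ∀ s, A s = (Matrix.of fun i j : Fin (m + 1) =>
      (Fin.cons (ν s) (fun k : Fin m => fderiv ℝ γ s (EuclideanSpace.single k 1))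
        : Fin (m + 1) → EuclideanSpace ℝ (Fin (m + 1))) j i).det)
    (a : ℝ) (T : Set ℝ) (hT : MeasurableSet T)
    (JΨ : EuclideanSpace ℝ (Fin m) → ℝ → Matrix (Fin (m + 1)) (Fin (m + 1)) ℝ)
    (hJΨ : ∀ s t, JΨ s t = Matrix.of fun i j : Fin (m + 1) =>
      (Fin.snoc
        (fun k : Fin m => fderiv ℝ (fun s' => φ t a (γ s')) s (EuclideanSpace.single k 1))
        (deriv (fun t' => φ t' a (γ s)) t)
        : Fin (m + 1) → EuclideanSpace ℝ (Fin (m + 1))) j i)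
    (deg : EuclideanSpace ℝ (Fin (m + 1)) → ℝ)
    (hdeg : ∀ p, deg p = ∑ᶠ q ∈ {q : EuclideanSpace ℝ (Fin m) × ℝ |
        q.1 ∈ K ∧ q.2 ∈ T ∧ φ q.2 a (γ q.1) = p},
      Real.sign (JΨ q.1 q.2).det)
    (hint : IntegrableOn
      (fun q : EuclideanSpace ℝ (Fin m) × ℝ =>
        ρ q.2 (γ q.1) * ⟪v q.2 (γ q.1), ν q.1⟫ * A q.1)
      (K ×ˢ T)) :
    Integrable (fun p => ρ a p * deg p) ∧
      ∫ t in T, ∫ s in K, ρ t (γ s) * ⟪v t (γ s), ν s⟫ * A s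
        = (-1 : ℝ) ^ (m + 1) * ∫ p, ρ a p * deg p := by
  let u := (EuclideanSpace.basisFun (Fin m) ℝ).toBasis
  let e := (EuclideanSpace.basisFun (Fin (m + 1)) ℝ).toBasis
  have hu (k) : u k = EuclideanSpace.single k 1 := by simp [u]
  have hA' (s) : A s = e.det (Fin.cons (ν s) fun k => fderiv ℝ γ s (u k)) := by
    simp only [hA, hu, matrix_det_eq_basisFun_det, e]
  have hdeg' (p) : deg p = ∑ᶠ q ∈ K ×ˢ T ∩ crossingMap φ γ a ⁻¹' {p},
      Real.sign (e.det (fderiv ℝ (crossingMap φ γ a) q ∘ spaceTimeFrame u)) := by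
    refine (hdeg p).trans (finsum_mem_congr (by ext; simp [crossingMap, and_assoc]) fun q hq => ?_)
    rw [fderiv_crossingMap_snoc hφ a (hγ _ hq.1.1), hJΨ, matrix_det_eq_basisFun_det]
    simp only [hu, e]
  have hdiv (t x) : divergence (fun y => ρ t y • v t y) x = _ := divergence_euclideanSpace
    (((contDiff_of_uncurry hρ t).smul (contDiff_of_uncurry hv t)).differentiable one_ne_zero x)
  have hvol : u.addHaar.prod (volume : Measure ℝ) = volume := by
    rw [OrthonormalBasis.addHaar_eq_volume]; rfl
  have hflux := integral_density_mul_degree_eq_integral_flux u e hφ hv hρ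
    (fun t x => by rw [hdiv]; exact hcons t x) a (hK.prod hT)
    (fun q hq => hγ _ hq.1) (fun q hq => hν _ hq.1)
    (fun q hq k => by rw [hu]; exact hνperp _ hq.1 k) (by simpa only [hvol, ← hA'] using hint)
  simp only [hvol, ← hA', ← hdeg', e, OrthonormalBasis.addHaar_eq_volume] at hflux
  refine ⟨hflux.1, (setIntegral_prod_symm _ hint).symm.trans ?_⟩
  rw [hflux.2, ← mul_assoc, ← mul_pow, neg_one_mul, neg_neg, one_pow, one_mul]
  rfl

/-- **Lagrangian flux representation for compressible flows**
(donating region theorem, parametrized form). Here the dimension is `n = m + 1 ≥ 2`.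
`φ` is a jointly `C¹` two-parameter flow of the `C¹` time-dependent vector field `v`,
`ρ` is a `C¹` solution of the conservation law `∂_t ρ + div_x(ρ v) = 0`,
`γ` parametrizes a hypersurface over the compact measurable set `K` with continuous unit
normal field `ν` (orthogonal to the tangent directions, with positive oriented surface
element `det[ν, ∂₁γ, …, ∂_mγ] > 0` on `K`), and `Ψ(s,t) = φ_t^0(γ(s))` is the crossing map,
with `n×n` Jacobian matrix `JΨ` (columns `∂_{s₁}Ψ, …, ∂_{s_m}Ψ, ∂_tΨ`). Assuming a.e. finite
nondegenerate fibers, with `deg(Ψ,p) = Σ_{(s,t) ∈ Ψ⁻¹{p}} sgn det JΨ(s,t)`, and the stated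
integrability, the Eulerian flux integral equals `(−1)ⁿ ∫ ρ(0,p) deg(Ψ,p) dp`. -/
theorem lagrangian_flux_representation (m : ℕ) (hm : 1 ≤ m)
    (v : ℝ → EuclideanSpace ℝ (Fin (m + 1)) → EuclideanSpace ℝ (Fin (m + 1)))
    (hv : ContDiff ℝ 1 fun q : ℝ × EuclideanSpace ℝ (Fin (m + 1)) => v q.1 q.2)
    (φ : ℝ → ℝ → EuclideanSpace ℝ (Fin (m + 1)) → EuclideanSpace ℝ (Fin (m + 1)))
    (hφC1 : ContDiff ℝ 1 fun q : ℝ × ℝ × EuclideanSpace ℝ (Fin (m + 1)) => φ q.1 q.2.1 q.2.2)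
    (hφid : ∀ a x, φ a a x = x)
    (hφ' : ∀ a b x, HasDerivAt (fun s => φ a s x) (v b (φ a b x)) b)
    (hφcomp : ∀ a b c x, φ b c (φ a b x) = φ a c x)
    (ρ : ℝ → EuclideanSpace ℝ (Fin (m + 1)) → ℝ)
    (hρ : ContDiff ℝ 1 fun q : ℝ × EuclideanSpace ℝ (Fin (m + 1)) => ρ q.1 q.2)
    (hcons : ∀ t x, deriv (fun s => ρ s x) t
      + ∑ i : Fin (m + 1),
          fderiv ℝ (fun y => ρ t y * v t y i) x (EuclideanSpace.single i 1) = 0)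
    (K : Set (EuclideanSpace ℝ (Fin m))) (hK : IsCompact K) (hKm : MeasurableSet K)
    (γ : EuclideanSpace ℝ (Fin m) → EuclideanSpace ℝ (Fin (m + 1)))
    (hγ : ContDiff ℝ 1 γ) (hγinj : Set.InjOn γ K)
    (ν : EuclideanSpace ℝ (Fin m) → EuclideanSpace ℝ (Fin (m + 1)))
    (hνcont : Continuous ν)
    (hν1 : ∀ s ∈ K, ‖ν s‖ = 1)
    (hνperp : ∀ s ∈ K, ∀ i : Fin m, ⟪ν s, fderiv ℝ γ s (EuclideanSpace.single i 1)⟫ = 0)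
    -- the oriented surface area element `det[ν(s), ∂₁γ(s), …, ∂_mγ(s)]`
    (A : EuclideanSpace ℝ (Fin m) → ℝ)
    (hA : ∀ s, A s = (Matrix.of fun i j : Fin (m + 1) =>
      (Fin.cons (ν s) (fun k : Fin m => fderiv ℝ γ s (EuclideanSpace.single k 1))
        : Fin (m + 1) → EuclideanSpace ℝ (Fin (m + 1))) j i).det)
    (hor : ∀ s ∈ K, 0 < A s)
    (τ : ℝ) (hτ : 0 < τ)
    -- the `n×n` Jacobian matrix of the crossing map `Ψ(s,t) = φ_t^0(γ(s))` in `(s,t)`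
    (JΨ : EuclideanSpace ℝ (Fin m) → ℝ → Matrix (Fin (m + 1)) (Fin (m + 1)) ℝ)
    (hJΨ : ∀ s t, JΨ s t = Matrix.of fun i j : Fin (m + 1) =>
      (Fin.snoc
        (fun k : Fin m => fderiv ℝ (fun s' => φ t 0 (γ s')) s (EuclideanSpace.single k 1))
        (deriv (fun t' => φ t' 0 (γ s)) t)
        : Fin (m + 1) → EuclideanSpace ℝ (Fin (m + 1))) j i)
    -- a.e. point has a finite fiber consisting of nondegenerate crossings
    (hfib : ∀ᵐ p : EuclideanSpace ℝ (Fin (m + 1)),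
      {q : EuclideanSpace ℝ (Fin m) × ℝ |
          q.1 ∈ K ∧ q.2 ∈ Set.Icc 0 τ ∧ φ q.2 0 (γ q.1) = p}.Finite ∧
      ∀ q ∈ {q : EuclideanSpace ℝ (Fin m) × ℝ |
          q.1 ∈ K ∧ q.2 ∈ Set.Icc 0 τ ∧ φ q.2 0 (γ q.1) = p},
        (JΨ q.1 q.2).det ≠ 0)
    -- the degree `deg(Ψ, p)`
    (deg : EuclideanSpace ℝ (Fin (m + 1)) → ℝ)
    (hdeg : ∀ p, deg p = ∑ᶠ q ∈ {q : EuclideanSpace ℝ (Fin m) × ℝ |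
        q.1 ∈ K ∧ q.2 ∈ Set.Icc 0 τ ∧ φ q.2 0 (γ q.1) = p},
      Real.sign (JΨ q.1 q.2).det)
    (hint1 : IntegrableOn
      (fun q : EuclideanSpace ℝ (Fin m) × ℝ =>
        ρ q.2 (γ q.1) * ⟪v q.2 (γ q.1), ν q.1⟫ * A q.1)
      (K ×ˢ Set.Icc 0 τ))
    (hint2 : Integrable fun p => ρ 0 p * deg p) :
    ∫ t in Set.Icc (0:ℝ) τ, ∫ s in K, ρ t (γ s) * ⟪v t (γ s), ν s⟫ * A s
      = (-1 : ℝ) ^ (m + 1) * ∫ p, ρ 0 p * deg p :=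
  (lagrangian_flux_representation_general m v hv φ ⟨hφC1, hφid, hφ', hφcomp⟩ ρ hρ hcons K hKm γ
    (fun _ _ => hγ.differentiable one_ne_zero _) ν hν1 hνperp A hA 0 _ measurableSet_Icc JΨ hJΨ deg
    hdeg hint1).2
end

section
/- Pointwise flux–Jacobian identity (Eq. (2.5) of the paper, parametrized form). Let n ≥ 2, let v : ℝ × ℝⁿ → ℝⁿ be a C¹ time-dependent vector field with a jointly C¹ two-parameter flow φ, so that φ_0^t ∘ φ_t^0 = id and φ_t^0 ∘ φ_0^t = id for every t. Let γ : ℝ^{n−1} → ℝⁿ be differentiable at a point s, and let ν ∈ ℝⁿ satisfy ‖ν‖ = 1 and ⟨ν, ∂_iγ(s)⟩ = 0 for i = 1,…,n−1. Define Ψ(s,t) := φ_t^0(γ(s)). Then for every t: det[∂_{s_1}Ψ(s,t), …, ∂_{s_{n−1}}Ψ(s,t), ∂_tΨ(s,t)] · det(D(φ_0^t)|_{Ψ(s,t)}) = (−1)ⁿ · ⟨v(t, γ(s)), ν⟩ · det[ν, ∂_1γ(s), …, ∂_{n−1}γ(s)]. Here the left-hand determinant is that of the n×n Jacobian of Ψ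 in the variables (s_1,…,s_{n−1},t). -/
open scoped RealInnerProductSpace

/-!
The linear map `A = D(φ_0^t)` at `Ψ(s,t)` undoes the spatial part of `Ψ`, so it sends `∂_{s_k}Ψ` to
`∂_kγ`; differentiating `φ_0^t(φ_t^0(x)) = x` in `t` shows that it sends `∂_tΨ` to `-v(t, γ(s))`.
Multiplicativity of the determinant turns the left-hand side into `det[∂_1γ, …, ∂_{n-1}γ, -v]`.
Moving the last column to the front costs `(-1)^{n-1}`, and modulo the tangent directions `v` equals
its component along `ν`.
-/

section LinearAlgebra

lemma alternatingMap_snoc_eq_smul_cons {R M N : Type*} [Ring R] [AddCommGroup M] [Module R M]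
    [AddCommGroup N] [Module R N] {m : ℕ} (f : M [⋀^Fin (m + 1)]→ₗ[R] N) (g : Fin m → M) (w : M) :
    f (Fin.snoc g w : Fin (m + 1) → M) = (-1 : R) ^ m • f (Fin.cons w g) := by
  rw [Fin.snoc_eq_cons_rotate]
  simpa [Function.comp_def, sign_finRotate, Units.smul_def, ← Int.cast_smul_eq_zsmul R]
    using f.map_perm (Fin.cons w g) (finRotate (m + 1))

variable {𝕜 E N : Type*} [RCLike 𝕜] [NormedAddCommGroup E] [InnerProductSpace 𝕜 E]
  [AddCommGroup N] [Module 𝕜 N]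

lemma not_linearIndependent_of_inner_eq_zero {ι : Type*} [Fintype ι] [Nonempty ι] {ν : E}
    (hν : ν ≠ 0) (hι : Fintype.card ι = Module.finrank 𝕜 E) {f : ι → E}
    (hf : ∀ i, inner 𝕜 ν (f i) = 0) :
    ¬ LinearIndependent 𝕜 f := by
  intro hli
  have hspan : ν ∈ Submodule.span 𝕜 (Set.range f) :=
    hli.span_eq_top_of_card_eq_finrank hι ▸ Submodule.mem_top
  have hle : Submodule.span 𝕜 (Set.range f) ≤ (𝕜 ∙ ν)ᗮ := Submodule.span_le.mpr <| by
    rintro _ ⟨i, rfl⟩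
    exact Submodule.mem_orthogonal_singleton_iff_inner_right.mpr (hf i)
  exact hν (inner_self_eq_zero.mp
    (Submodule.mem_orthogonal_singleton_iff_inner_right.mp (hle hspan)))

lemma norm_sq_smul_alternatingMap_cons {m : ℕ} (hE : Module.finrank 𝕜 E = m + 1)
    (f : E [⋀^Fin (m + 1)]→ₗ[𝕜] N) {ν : E} {g : Fin m → E} (hg : ∀ k, inner 𝕜 ν (g k) = 0)
    (w : E) :
    (‖ν‖ ^ 2 : 𝕜) • f (Fin.cons w g) = inner 𝕜 ν w • f (Fin.cons ν g) := by
  obtain rfl | hν := eq_or_ne ν 0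
  · simp
  set z : E := (‖ν‖ ^ 2 : 𝕜) • w - inner 𝕜 ν w • ν with hz
  have hperp : ∀ k, inner 𝕜 ν ((Fin.cons z g : Fin (m + 1) → E) k) = 0 := by
    refine Fin.cases ?_ hg
    simp [hz, inner_sub_right, inner_smul_right, inner_self_eq_norm_sq_to_K, mul_comm]
  have hzero : f (Fin.cons z g) = 0 :=
    f.map_linearDependent _ (not_linearIndependent_of_inner_eq_zero hν (by simp [hE]) hperp)
  have hlin : f.curryLeft z g =
      (‖ν‖ ^ 2 : 𝕜) • f.curryLeft w g - inner 𝕜 ν w • f.curryLeft ν g := by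
    simp only [hz, map_sub, map_smul, AlternatingMap.sub_apply, AlternatingMap.smul_apply]
  exact sub_eq_zero.mp (hlin.symm.trans hzero)

lemma norm_sq_smul_alternatingMap_snoc {m : ℕ} (hE : Module.finrank 𝕜 E = m + 1)
    (f : E [⋀^Fin (m + 1)]→ₗ[𝕜] N) {ν : E} {g : Fin m → E} (hg : ∀ k, inner 𝕜 ν (g k) = 0)
    (w : E) :
    (‖ν‖ ^ 2 : 𝕜) • f (Fin.snoc g w : Fin (m + 1) → E) =
      ((-1) ^ m * inner 𝕜 ν w) • f (Fin.cons ν g) := by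
  rw [alternatingMap_snoc_eq_smul_cons, smul_comm, norm_sq_smul_alternatingMap_cons hE f hg,
    smul_smul]

lemma det_of_columns_eq_det_basisFun {ι : Type*} [Fintype ι] [DecidableEq ι]
    (f : ι → EuclideanSpace 𝕜 ι) :
    (Matrix.of fun i j => f j i).det = (EuclideanSpace.basisFun ι 𝕜).toBasis.det f :=
  rfl

end LinearAlgebra

section Calculus

variable {𝕜 E F : Type*} [NontriviallyNormedField 𝕜] [NormedAddCommGroup E] [NormedSpace 𝕜 E]
  [NormedAddCommGroup F] [NormedSpace 𝕜 F]

lemma hasDerivAt_apply_curve {ψ : 𝕜 → E → F} {χ : 𝕜 → E} {t : 𝕜} {u : F} {χ' : E}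
    (hψ : DifferentiableAt 𝕜 (fun q : 𝕜 × E => ψ q.1 q.2) (t, χ t))
    (hu : HasDerivAt (fun b => ψ b (χ t)) u t) (hχ : HasDerivAt χ χ' t) :
    HasDerivAt (fun b => ψ b (χ b)) (u + fderiv 𝕜 (ψ t) (χ t) χ') t := by
  obtain ⟨L, hL⟩ := hψ
  have htime : HasDerivAt (fun b => ψ b (χ t)) (L (1, 0)) t :=
    HasFDerivAt.comp_hasDerivAt (l := fun q : 𝕜 × E => ψ q.1 q.2) t hL
      ((hasDerivAt_id t).prodMk (hasDerivAt_const t (χ t)))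
  have htotal : HasDerivAt (fun b => ψ b (χ b)) (L (1, χ')) t :=
    HasFDerivAt.comp_hasDerivAt (l := fun q : 𝕜 × E => ψ q.1 q.2) t hL
      ((hasDerivAt_id t).prodMk hχ)
  have hspace : HasFDerivAt (ψ t) (L.comp (.inr 𝕜 𝕜 E)) (χ t) :=
    hL.comp (χ t) (hasFDerivAt_prodMk_right t (χ t))
  have hsplit : u + fderiv 𝕜 (ψ t) (χ t) χ' = L (1, χ') := by
    rw [hspace.fderiv, hu.unique htime]
    simp [← map_add]
  exact hsplit ▸ htotal

lemma fderiv_apply_deriv_eq_neg_of_apply_curve_eq_const {ψ : 𝕜 → E → F} {χ : 𝕜 → E} {t : 𝕜}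
    {x u : F} (hψ : DifferentiableAt 𝕜 (fun q : 𝕜 × E => ψ q.1 q.2) (t, χ t))
    (hu : HasDerivAt (fun b => ψ b (χ t)) u t) (hχ : DifferentiableAt 𝕜 χ t)
    (hx : ∀ b, ψ b (χ b) = x) :
    fderiv 𝕜 (ψ t) (χ t) (deriv χ t) = -u := by
  have htotal := hasDerivAt_apply_curve hψ hu hχ.hasDerivAt
  simp only [hx] at htotal
  exact eq_neg_of_add_eq_zero_right (htotal.unique (hasDerivAt_const t x))

end Calculus

theorem pointwise_flux_jacobian_identity_general {E H : Type*} [NormedAddCommGroup E]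
    [InnerProductSpace ℝ E] [NormedAddCommGroup H] [NormedSpace ℝ H] {m : ℕ}
    (B : Module.Basis (Fin (m + 1)) ℝ E) {v : ℝ → E → E} {φ : ℝ → ℝ → E → E} {a : ℝ}
    (hφ : Differentiable ℝ fun q : ℝ × ℝ × E => φ q.1 q.2.1 q.2.2)
    (hφinv : ∀ b x, φ a b (φ b a x) = x)
    (hφ' : ∀ b x, HasDerivAt (fun r => φ a r x) (v b (φ a b x)) b)
    {γ : H → E} {s : H} (hγ : DifferentiableAt ℝ γ s) (e : Fin m → H) {ν : E}
    (hν : ∀ k, ⟪ν, fderiv ℝ γ s (e k)⟫ = 0) (t : ℝ) :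
    ‖ν‖ ^ 2 *
        (B.det (Fin.snoc (fun k => fderiv ℝ (fun s' => φ t a (γ s')) s (e k))
            (deriv (fun r => φ r a (γ s)) t) : Fin (m + 1) → E) *
          (fderiv ℝ (φ a t) (φ t a (γ s))).det) =
      (-1) ^ (m + 1) * ⟪v t (γ s), ν⟫ * B.det (Fin.cons ν fun k => fderiv ℝ γ s (e k)) := by
  set A := fderiv ℝ (φ a t) (φ t a (γ s))
  set Ψ : H → E := fun s' => φ t a (γ s')
  have htime : A (deriv (fun r => φ r a (γ s)) t) = -v t (γ s) := by
    refine fderiv_apply_deriv_eq_neg_of_apply_curve_eq_const (ψ := φ a) (x := γ s) ?_ ?_ ?_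
      fun b => hφinv b (γ s)
    · exact (hφ.comp (f := fun q : ℝ × E => (a, q.1, q.2)) (by fun_prop)).differentiableAt
    · simpa only [hφinv] using hφ' t (φ t a (γ s))
    · exact (hφ.comp (f := fun r : ℝ => (r, a, γ s)) (by fun_prop)).differentiableAt
  have htangent : A.comp (fderiv ℝ Ψ s) = fderiv ℝ γ s := by
    have hspace (b c : ℝ) : Differentiable ℝ (φ b c) :=
      hφ.comp (f := fun y => (b, c, y)) (by fun_prop)
    have hleft : φ a t ∘ Ψ = γ := funext fun s' => hφinv t (γ s')
    rw [← fderiv_comp s (hspace a t (Ψ s)) ((hspace t a (γ s)).comp s hγ), hleft]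
  have hcolumns : A ∘ (Fin.snoc (fun k => fderiv ℝ Ψ s (e k)) (deriv (fun r => φ r a (γ s)) t) :
      Fin (m + 1) → E) = Fin.snoc (fun k => fderiv ℝ γ s (e k)) (-v t (γ s)) := by
    rw [Fin.comp_snoc, htime, ← htangent]
    rfl
  have hE : Module.finrank ℝ E = m + 1 := by simp [Module.finrank_eq_card_basis B]
  calc
    _ = ‖ν‖ ^ 2 * B.det (Fin.snoc (fun k => fderiv ℝ γ s (e k)) (-v t (γ s)) :
          Fin (m + 1) → E) := by
      rw [mul_comm (B.det _), ContinuousLinearMap.det, ← B.det_comp, ContinuousLinearMap.coe_coe,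
        hcolumns]
    _ = (-1) ^ m * ⟪ν, -v t (γ s)⟫ * B.det (Fin.cons ν fun k => fderiv ℝ γ s (e k)) :=
      norm_sq_smul_alternatingMap_snoc hE B.det hν _
    _ = _ := by
      rw [inner_neg_right, real_inner_comm]
      ring

/-- **Pointwise flux–Jacobian identity** (Eq. (2.5) of the paper, parametrized form).
Here `n = m + 1 ≥ 2`. With `Ψ(s,t) = φ_t^0(γ(s))` the crossing map, for a unit normal `ν`
at `γ(s)` orthogonal to all tangent directions `∂_iγ(s)`:
`det[∂_{s₁}Ψ, …, ∂_{s_{n-1}}Ψ, ∂_tΨ] · det(D(φ_0^t)|_{Ψ(s,t)})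
  = (−1)ⁿ ⟨v(t,γ(s)), ν⟩ · det[ν, ∂_1γ(s), …, ∂_{n-1}γ(s)]`. -/
theorem pointwise_flux_jacobian_identity (m : ℕ) (hm : 1 ≤ m)
    (v : ℝ → EuclideanSpace ℝ (Fin (m + 1)) → EuclideanSpace ℝ (Fin (m + 1)))
    (hv : ContDiff ℝ 1 fun q : ℝ × EuclideanSpace ℝ (Fin (m + 1)) => v q.1 q.2)
    (φ : ℝ → ℝ → EuclideanSpace ℝ (Fin (m + 1)) → EuclideanSpace ℝ (Fin (m + 1)))
    (hφC1 : ContDiff ℝ 1 fun q : ℝ × ℝ × EuclideanSpace ℝ (Fin (m + 1)) => φ q.1 q.2.1 q.2.2)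
    (hφid : ∀ a x, φ a a x = x)
    (hφ' : ∀ a b x, HasDerivAt (fun s => φ a s x) (v b (φ a b x)) b)
    (hφcomp : ∀ a b c x, φ b c (φ a b x) = φ a c x)
    (γ : EuclideanSpace ℝ (Fin m) → EuclideanSpace ℝ (Fin (m + 1)))
    (s : EuclideanSpace ℝ (Fin m))
    (hγ : DifferentiableAt ℝ γ s)
    (ν : EuclideanSpace ℝ (Fin (m + 1)))
    (hν1 : ‖ν‖ = 1)
    (hνperp : ∀ i : Fin m, ⟪ν, fderiv ℝ γ s (EuclideanSpace.single i 1)⟫ = 0)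
    (t : ℝ) :
    (Matrix.of fun i j : Fin (m + 1) =>
        (Fin.snoc
          (fun k : Fin m =>
            fderiv ℝ (fun s' => φ t 0 (γ s')) s (EuclideanSpace.single k 1))
          (deriv (fun t' => φ t' 0 (γ s)) t)
          : Fin (m + 1) → EuclideanSpace ℝ (Fin (m + 1))) j i).det
      * (fderiv ℝ (φ 0 t) (φ t 0 (γ s))).det
    = (-1 : ℝ) ^ (m + 1) * ⟪v t (γ s), ν⟫ *
      (Matrix.of fun i j : Fin (m + 1) =>
        (Fin.cons ν (fun k : Fin m => fderiv ℝ γ s (EuclideanSpace.single k 1))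
          : Fin (m + 1) → EuclideanSpace ℝ (Fin (m + 1))) j i).det := by
  rw [det_of_columns_eq_det_basisFun, det_of_columns_eq_det_basisFun]
  simpa only [hν1, one_pow, one_mul] using
    pointwise_flux_jacobian_identity_general (EuclideanSpace.basisFun _ ℝ).toBasis
      (hφC1.differentiable one_ne_zero) (fun b x => (hφcomp b 0 b x).trans (hφid b x)) (hφ' 0)
      hγ _ hνperp t
end

section
/- Constancy of the signed crossing count (degree) on components of the complement of the boundary image. Let n ≥ 1, let f : ℝⁿ → ℝⁿ be C¹, and let Ω ⊂ ℝⁿ be a bounded open set with topological frontier ∂Ω. Suppose p, q ∈ ℝⁿ do not lie in f(∂Ω), lie in the same path-component of ℝⁿ \ f(∂Ω), and are regular values of f on the closure of Ω, i.e. det Df(x) ≠ 0 for every x in the closure of Ω with f(x) ∈ {p, q}. Then the fibers f^{−1}({p}) ∩ Ω and f^{−1}({q}) ∩ Ω are finite, and Σ_{x ∈ f^{−1}({p}) ∩ Ω} sgn(det Df(x)) = Σ_{x ∈ f^{−1}({q}) ∩ Ω} sgn(det Df(x)). -/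
/-!
If `h` is `C¹` with compact support, then for large `a` the map `x ↦ a x + h x` is a bijection
which is the dilation by `a` off the support of `h`. Hence the integral of `det (a + Dh)` over that
support, a polynomial in `a`, equals `aⁿ` times its volume for all large `a`, and so for `a = 0`:
`∫ det Dh = 0`. Thus `∫_Ω det Df` does not change under a perturbation of `f` compactly supported
in `Ω`. Perturbing `f` by `(φ ∘ f) v` shows that `∫_Ω dφ(v)(f x) det Df(x) dx = 0` whenever the
support of `φ` misses `f(∂Ω)`, that is, `∫_Ω φ(f x - y) det Df(x) dx` is locally constant in `y`.
When `y` is a regular value and `φ` is concentrated near the origin, this integral is the signed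
count of the fiber over `y` times `∫ φ`, by a change of variables on each sheet over a
neighbourhood of `y`.
-/

open MeasureTheory Metric Set Filter Topology Function Module

section Determinant

theorem exists_finset_eval_eq_sum {K : Type*} [Field K] {S : Set K} (hS : S.Infinite) (n : ℕ)
    (x : K) : ∃ (s : Finset K) (c : K → K), ↑s ⊆ S ∧
      ∀ P : Polynomial K, P.natDegree ≤ n → P.eval x = ∑ a ∈ s, c a * P.eval a := by
  classical
  obtain ⟨s, hs, hcard⟩ := hS.exists_subset_card_eq (n + 1)
  refine ⟨s, fun a ↦ (Lagrange.basis s id a).eval x, hs, fun P hP ↦ ?_⟩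
  have hdeg : P.degree < s.card := by
    rw [hcard]
    exact Polynomial.degree_le_natDegree.trans_lt (by exact_mod_cast Nat.lt_succ_of_le hP)
  conv_lhs => rw [Lagrange.eq_interpolate (injOn_id _) hdeg, Lagrange.interpolate_apply]
  simp [Polynomial.eval_finsetSum, mul_comm]

variable {E : Type*} [NormedAddCommGroup E] [NormedSpace ℝ E] [FiniteDimensional ℝ E]

theorem eval_charpoly_neg (A : E →L[ℝ] E) (a : ℝ) :
    (-(A : E →ₗ[ℝ] E)).charpoly.eval a = (a • (1 : E →L[ℝ] E) + A).det := by
  rw [LinearMap.eval_charpoly, sub_neg_eq_add, Algebra.algebraMap_eq_smul_one]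
  rfl

theorem det_add_smulRight_comp (A : E →L[ℝ] E) (ℓ : E →L[ℝ] ℝ) (v : E) :
    (A + (ℓ.comp A).smulRight v).det = (1 + ℓ v) * A.det := by
  have h : ((A + (ℓ.comp A).smulRight v : E →L[ℝ] E) : E →ₗ[ℝ] E) =
      LinearMap.transvection (ℓ : E →ₗ[ℝ] ℝ) v ∘ₗ (A : E →ₗ[ℝ] E) := by
    ext w
    simp [LinearMap.transvection.apply]
  rw [ContinuousLinearMap.det, h, LinearMap.det_comp, LinearMap.transvection.det]
  rfl

theorem det_one_add_pos {A : E →L[ℝ] E} (hA : ‖A‖ < 1) :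
    0 < (1 + A).det := by
  have hne : ∀ B ∈ ball (0 : E →L[ℝ] E) 1, (1 + B).det ≠ 0 := fun B hB ↦ by
    have hu : IsUnit (1 + B) := by
      simpa using isUnit_one_sub_of_norm_lt_one (x := -B) (by simpa using hB)
    exact ((hu.map ContinuousLinearMap.toLinearMapRingHom).map LinearMap.det).ne_zero
  have hcont : Continuous fun B : E →L[ℝ] E ↦ (1 + B).det :=
    ContinuousLinearMap.continuous_det.comp (continuous_const.add continuous_id)
  by_contra! hle
  obtain ⟨B, hB, hB0⟩ := (convex_ball (0 : E →L[ℝ] E) 1).isPreconnected.intermediate_value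
    (mem_ball_zero_iff.2 hA) (mem_ball_self one_pos) hcont.continuousOn
    ⟨hle, by simp [ContinuousLinearMap.det]⟩
  exact hne B hB hB0

end Determinant

section Volume

theorem bijective_id_add_of_lipschitzWith {E : Type*} [NormedAddCommGroup E] [NormedSpace ℝ E]
    [CompleteSpace E] {u : E → E} {K : NNReal} (hu : LipschitzWith K u) (hK : K < 1) :
    Bijective fun x ↦ x + u x := by
  have happrox : ApproximatesLinearOn (fun x ↦ x + u x)
      ((ContinuousLinearEquiv.refl ℝ E : E ≃L[ℝ] E) : E →L[ℝ] E) univ K := by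
    refine LipschitzOnWith.approximatesLinearOn (LipschitzWith.lipschitzOnWith ?_)
    convert! hu using 1
    ext x
    simp
  have hsmall : Subsingleton E ∨
      K < ‖((ContinuousLinearEquiv.refl ℝ E).symm : E →L[ℝ] E)‖₊⁻¹ := by
    rcases subsingleton_or_nontrivial E with hE | hE
    · exact .inl hE
    · have hnorm : ‖((ContinuousLinearEquiv.refl ℝ E).symm : E →L[ℝ] E)‖₊ = 1 :=
        NNReal.eq (ContinuousLinearMap.norm_id (𝕜 := ℝ) (E := E))
      exact .inr (by rwa [hnorm, inv_one])
  exact ⟨injOn_univ.1 (happrox.injOn hsmall), happrox.surjective hsmall⟩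

variable {E : Type*} [NormedAddCommGroup E] [NormedSpace ℝ E] [FiniteDimensional ℝ E]
  [MeasurableSpace E] [BorelSpace E] (μ : Measure E) [μ.IsAddHaarMeasure]
  {u : E → E} {K : NNReal} {s : Set E}

theorem setIntegral_det_one_add_fderiv (hu : LipschitzWith K u) (hK : K < 1)
    (hd : Differentiable ℝ u) (hs : MeasurableSet s) (hus : ∀ x ∉ s, u x = 0) :
    ∫ x in s, (1 + fderiv ℝ u x).det ∂μ = μ.real s := by
  have hbij := bijective_id_add_of_lipschitzWith hu hK
  have himage : (fun x ↦ x + u x) '' s = s := by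
    rw [← compl_inj_iff, ← image_compl_eq hbij]
    exact (image_congr fun x hx ↦ by rw [hus x hx, add_zero]).trans (image_id' _)
  have hderiv : ∀ x, HasFDerivAt (fun x ↦ x + u x) (1 + fderiv ℝ u x) x := fun x ↦
    (hasFDerivAt_id x).add (hd x).hasFDerivAt
  have hpos : ∀ x, 0 < (1 + fderiv ℝ u x).det := fun x ↦
    det_one_add_pos ((norm_fderiv_le_of_lipschitz ℝ hu).trans_lt hK)
  calc ∫ x in s, (1 + fderiv ℝ u x).det ∂μ
      = ∫ x in s, |(1 + fderiv ℝ u x).det| • (1 : ℝ) ∂μ := by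
        simp_rw [abs_of_pos (hpos _), smul_eq_mul, mul_one]
    _ = ∫ _ in (fun x ↦ x + u x) '' s, (1 : ℝ) ∂μ :=
        (integral_image_eq_integral_abs_det_fderiv_smul μ hs
          (fun x _ ↦ (hderiv x).hasFDerivWithinAt) hbij.injective.injOn (fun _ ↦ (1 : ℝ))).symm
    _ = μ.real s := by rw [himage]; simp

theorem setIntegral_det_smul_one_add_fderiv (hu : LipschitzWith K u) {a : ℝ} (ha : K < a)
    (hd : Differentiable ℝ u) (hs : MeasurableSet s) (hus : ∀ x ∉ s, u x = 0) :
    ∫ x in s, (a • (1 : E →L[ℝ] E) + fderiv ℝ u x).det ∂μ = a ^ finrank ℝ E * μ.real s := by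
  have ha0 : 0 < a := K.coe_nonneg.trans_lt ha
  have hscale : LipschitzWith (‖a⁻¹‖₊ * K) (a⁻¹ • u) := (lipschitzWith_smul a⁻¹).comp hu
  have hlt : ‖a⁻¹‖₊ * K < 1 := by
    rw [← NNReal.coe_lt_coe]
    simpa [abs_of_pos ha0] using (inv_mul_lt_one₀ ha0).2 ha
  have hdet : ∀ x, (a • (1 : E →L[ℝ] E) + fderiv ℝ u x).det =
      a ^ finrank ℝ E * (1 + fderiv ℝ (a⁻¹ • u) x).det := fun x ↦ by
    rw [fderiv_const_smul (hd x), ContinuousLinearMap.det, ContinuousLinearMap.det,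
      ← LinearMap.det_smul, ← ContinuousLinearMap.toLinearMap_smul, smul_add,
      smul_inv_smul₀ ha0.ne']
  simp_rw [hdet, integral_const_mul]
  rw [setIntegral_det_one_add_fderiv μ hscale hlt (hd.const_smul _) hs
    fun x hx ↦ by simp [hus x hx]]

end Volume

section NullLagrangian

variable {E : Type*} [NormedAddCommGroup E] [NormedSpace ℝ E]

theorem continuousOn_det_fderiv {f : E → E} {Ω : Set E} (hΩo : IsOpen Ω)
    (hf : ContDiffOn ℝ 1 f Ω) : ContinuousOn (fun x ↦ (fderiv ℝ f x).det) Ω :=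
  ContinuousLinearMap.continuous_det.comp_continuousOn
    (hf.continuousOn_fderiv_of_isOpen hΩo le_rfl)

theorem contDiff_of_forall_mem_tsupport {F : Type*} [NormedAddCommGroup F] [NormedSpace ℝ F]
    {n : WithTop ℕ∞} {g : E → F} (hg : ∀ x ∈ tsupport g, ContDiffAt ℝ n g x) :
    ContDiff ℝ n g :=
  contDiff_iff_contDiffAt.2 fun x ↦ by
    by_cases hx : x ∈ tsupport g
    · exact hg x hx
    · exact contDiffAt_const.congr_of_eventuallyEq (notMem_tsupport_iff_eventuallyEq.1 hx)

variable [FiniteDimensional ℝ E]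

open scoped ContDiff Manifold in
theorem exists_contDiff_eventually_eq_one {K Ω : Set E} (hK : IsCompact K) (hΩo : IsOpen Ω)
    (hKΩ : K ⊆ Ω) : ∃ χ : E → ℝ, ContDiff ℝ ∞ χ ∧ HasCompactSupport χ ∧ tsupport χ ⊆ Ω ∧
      ∀ x ∈ K, χ =ᶠ[𝓝 x] 1 := by
  obtain ⟨L, hL, hLc, hKL, hLΩ⟩ := exists_compact_closed_between hK hΩo hKΩ
  obtain ⟨χ, hχK, hχL, -⟩ := exists_contMDiffMap_one_nhds_of_subset_interior
    (n := (⊤ : ℕ∞)) 𝓘(ℝ, E) hK.isClosed hKL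
  refine ⟨χ, χ.contMDiff.contDiff, HasCompactSupport.intro hL hχL, ?_,
    fun x hx ↦ eventually_nhdsSet_iff_forall.1 hχK x hx⟩
  exact (closure_minimal (fun x hx ↦ by_contra fun h ↦ mem_support.1 hx (hχL x h)) hLc).trans hLΩ

variable [MeasurableSpace E] [BorelSpace E] (μ : Measure E) [μ.IsAddHaarMeasure]

theorem integrable_det_fderiv [Nontrivial E] {h : E → E} (hh : ContDiff ℝ 1 h)
    (hc : HasCompactSupport h) : Integrable (fun x ↦ (fderiv ℝ h x).det) μ :=
  (ContinuousLinearMap.continuous_det.comp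
    (hh.continuous_fderiv one_ne_zero)).integrable_of_hasCompactSupport
    ((hc.fderiv ℝ).comp_left (g := fun A : E →L[ℝ] E ↦ A.det)
      (by simp [ContinuousLinearMap.det]))

theorem integral_det_fderiv_eq_zero [Nontrivial E] {h : E → E} (hh : ContDiff ℝ 1 h)
    (hc : HasCompactSupport h) : ∫ x, (fderiv ℝ h x).det ∂μ = 0 := by
  obtain ⟨C, hC⟩ := ContDiff.lipschitzWith_of_hasCompactSupport hc hh one_ne_zero
  obtain ⟨s, c, hs, hsum⟩ := exists_finset_eval_eq_sum (Ioi_infinite (C : ℝ)) (finrank ℝ E) 0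
  -- The nodes `a` lie beyond the Lipschitz constant, where the integral of `det (a + Dh)` is known.
  have hdet : ∀ x, (fderiv ℝ h x).det =
      ∑ a ∈ s, c a * (a • (1 : E →L[ℝ] E) + fderiv ℝ h x).det := fun x ↦ by
    simpa only [eval_charpoly_neg, zero_smul, zero_add] using
      hsum (-(fderiv ℝ h x : E →ₗ[ℝ] E)).charpoly (LinearMap.charpoly_natDegree _).le
  have hpow : ∑ a ∈ s, c a * a ^ finrank ℝ E = 0 := by
    simpa [finrank_pos.ne'] using (hsum (Polynomial.X ^ finrank ℝ E) (by simp)).symm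
  have hint : ∀ a : ℝ, IntegrableOn (fun x ↦ (a • (1 : E →L[ℝ] E) + fderiv ℝ h x).det)
      (tsupport h) μ := fun a ↦
    (ContinuousLinearMap.continuous_det.comp (continuous_const.add
      (hh.continuous_fderiv one_ne_zero))).continuousOn.integrableOn_compact hc
  calc ∫ x, (fderiv ℝ h x).det ∂μ
      = ∫ x in tsupport h, (fderiv ℝ h x).det ∂μ :=
        (setIntegral_eq_integral_of_forall_compl_eq_zero fun x hx ↦ by
          simp [fderiv_of_notMem_tsupport ℝ hx, ContinuousLinearMap.det]).symm
    _ = ∑ a ∈ s, c a * ∫ x in tsupport h, (a • (1 : E →L[ℝ] E) + fderiv ℝ h x).det ∂μ := by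
        simp_rw [hdet, ← integral_const_mul]
        exact integral_finsetSum _ fun a _ ↦ (hint a).const_mul _
    _ = ∑ a ∈ s, c a * (a ^ finrank ℝ E * μ.real (tsupport h)) :=
        Finset.sum_congr rfl fun a ha ↦ by
          rw [setIntegral_det_smul_one_add_fderiv μ hC (hs ha) (hh.differentiable one_ne_zero)
            (isClosed_tsupport h).measurableSet fun x hx ↦ image_eq_zero_of_notMem_tsupport hx]
    _ = 0 := by simp_rw [← mul_assoc, ← Finset.sum_mul, hpow, zero_mul]

theorem setIntegral_det_fderiv_add_sub_eq_zero [Nontrivial E] {f k : E → E} {Ω : Set E}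
    (hΩo : IsOpen Ω) (hf : ContDiffOn ℝ 1 f Ω) (hk : ContDiff ℝ 1 k) (hkc : HasCompactSupport k)
    (hkΩ : tsupport k ⊆ Ω) :
    ∫ x in Ω, ((fderiv ℝ (f + k) x).det - (fderiv ℝ f x).det) ∂μ = 0 := by
  obtain ⟨χ, hχ, hχc, hχΩ, hχ1⟩ := exists_contDiff_eventually_eq_one hkc hΩo hkΩ
  -- `f` is only given on `Ω`; `h` is a global map with the same germ at each point of `tsupport k`.
  let h : E → E := χ • f
  have hh : ContDiff ℝ 1 h := contDiff_of_forall_mem_tsupport fun x hx ↦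
    (hχ.of_le (by simp)).contDiffAt.smul
      (hf.contDiffAt (hΩo.mem_nhds (hχΩ (tsupport_smul_subset_left χ f hx))))
  have hhc : HasCompactSupport h := hχc.smul_right
  have hhk : ContDiff ℝ 1 (h + k) := hh.add hk
  have hhkc : HasCompactSupport (h + k) := hhc.add hkc
  have hoff : ∀ g : E → E, ∀ x ∉ tsupport k,
      (fderiv ℝ (g + k) x).det - (fderiv ℝ g x).det = 0 := fun g x hx ↦ by
    have : g + k =ᶠ[𝓝 x] g := by
      filter_upwards [notMem_tsupport_iff_eventuallyEq.1 hx] with z hz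
      simp [hz]
    rw [this.fderiv_eq, sub_self]
  have hdiff : ∀ x, (fderiv ℝ (f + k) x).det - (fderiv ℝ f x).det =
      (fderiv ℝ (h + k) x).det - (fderiv ℝ h x).det := fun x ↦ by
    by_cases hx : x ∈ tsupport k
    · have hfh : f =ᶠ[𝓝 x] h := by
        filter_upwards [hχ1 x hx] with z hz
        simp [h, hz]
      rw [hfh.fderiv_eq, (hfh.add .rfl).fderiv_eq]
    · rw [hoff f x hx, hoff h x hx]
  simp_rw [hdiff]
  rw [setIntegral_eq_integral_of_forall_compl_eq_zero fun x hx ↦ hoff h x fun hxk ↦ hx (hkΩ hxk),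
    integral_sub (integrable_det_fderiv μ hhk hhkc) (integrable_det_fderiv μ hh hhc),
    integral_det_fderiv_eq_zero μ hhk hhkc, integral_det_fderiv_eq_zero μ hh hhc, sub_zero]

end NullLagrangian

section BoundedDomain

variable {X : Type*} [PseudoMetricSpace X] [ProperSpace X] {Ω : Set X}

theorem isCompact_image_frontier {Y : Type*} [TopologicalSpace Y] {f : X → Y}
    (hΩb : Bornology.IsBounded Ω) (hfc : ContinuousOn f (closure Ω)) :
    IsCompact (f '' frontier Ω) :=
  (hΩb.isCompact_closure.of_isClosed_subset isClosed_frontier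
    frontier_subset_closure).image_of_continuousOn (hfc.mono frontier_subset_closure)

theorem isCompact_inter_preimage_of_disjoint_image_frontier {Y : Type*} [TopologicalSpace Y]
    {f : X → Y} (hΩb : Bornology.IsBounded Ω) (hfc : ContinuousOn f (closure Ω)) {T : Set Y}
    (hT : IsClosed T) (hTf : Disjoint T (f '' frontier Ω)) : IsCompact (Ω ∩ f ⁻¹' T) := by
  have heq : Ω ∩ f ⁻¹' T = closure Ω ∩ f ⁻¹' T := by
    refine subset_antisymm (inter_subset_inter_left _ subset_closure) fun x hx ↦ ⟨?_, hx.2⟩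
    by_contra hxΩ
    exact disjoint_left.1 hTf hx.2 ⟨x, ⟨hx.1, fun hi ↦ hxΩ (interior_subset hi)⟩, rfl⟩
  rw [heq]
  exact hΩb.isCompact_closure.of_isClosed_subset
    (hfc.preimage_isClosed_of_isClosed isClosed_closure hT) inter_subset_left

theorem exists_isCompact_eventually_sub_notMem_tsupport {E : Type*} [NormedAddCommGroup E]
    {f : X → E} (hΩb : Bornology.IsBounded Ω) (hfc : ContinuousOn f (closure Ω))
    {φ : E → ℝ} (hφc : HasCompactSupport φ) {y : E}
    (hsupp : ∀ x ∈ frontier Ω, f x - y ∉ tsupport φ) :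
    ∃ K ⊆ Ω, IsCompact K ∧ ∀ᶠ z in 𝓝 y, ∀ x ∈ Ω \ K, f x - z ∉ tsupport φ := by
  have hTc : IsCompact ((· + y) '' tsupport φ) := hφc.isCompact.image (continuous_add_const y)
  have hdisj : Disjoint ((· + y) '' tsupport φ) (f '' frontier Ω) := by
    rw [disjoint_right]
    rintro _ ⟨x, hx, rfl⟩ ⟨w, hw, hwx⟩
    exact hsupp x hx (by rwa [← hwx, add_sub_cancel_right])
  obtain ⟨ρ, hρ, hρd⟩ := hdisj.exists_cthickenings hTc (isCompact_image_frontier hΩb hfc).isClosed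
  refine ⟨Ω ∩ f ⁻¹' cthickening ρ ((· + y) '' tsupport φ), inter_subset_left,
    isCompact_inter_preimage_of_disjoint_image_frontier hΩb hfc isClosed_cthickening
      (hρd.mono_right (self_subset_cthickening _)), ?_⟩
  filter_upwards [closedBall_mem_nhds y hρ] with z hz x hx hxz
  refine hx.2 ⟨hx.1, mem_cthickening_of_dist_le (f x) (f x - z + y) ρ _ ⟨_, hxz, rfl⟩ ?_⟩
  have : f x - (f x - z + y) = z - y := by abel
  rwa [dist_eq_norm, this, ← dist_eq_norm]

end BoundedDomain

section DegreeIntegral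

variable {E : Type*} [NormedAddCommGroup E] [NormedSpace ℝ E] {f : E → E} {Ω : Set E}

theorem contDiff_indicator_of_tsupport_subset {F : Type*} [NormedAddCommGroup F] [NormedSpace ℝ F]
    {n : WithTop ℕ∞} {g : E → F} (hΩo : IsOpen Ω) (hg : ContDiffOn ℝ n g Ω)
    (hgΩ : tsupport (Ω.indicator g) ⊆ Ω) : ContDiff ℝ n (Ω.indicator g) :=
  contDiff_of_forall_mem_tsupport fun _ hx ↦
    (hg.contDiffAt (hΩo.mem_nhds (hgΩ hx))).congr_of_eventuallyEq
      (eqOn_indicator.eventuallyEq_of_mem (hΩo.mem_nhds (hgΩ hx)))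

theorem hasFDerivAt_setIntegral_comp_sub_mul {X : Type*} [TopologicalSpace X] [T2Space X]
    [MeasurableSpace X] [OpensMeasurableSpace X] {ν : Measure X} [IsFiniteMeasureOnCompacts ν]
    {K : Set X} (hK : IsCompact K) {F : X → E} (hF : ContinuousOn F K) {w : X → ℝ}
    (hw : ContinuousOn w K) {φ : E → ℝ} (hφ : ContDiff ℝ 1 φ) (hφc : HasCompactSupport φ)
    (y : E) :
    HasFDerivAt (fun z ↦ ∫ x in K, φ (F x - z) * w x ∂ν)
      (∫ x in K, -(w x • fderiv ℝ φ (F x - y)) ∂ν) y := by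
  have hφ' : Continuous (fderiv ℝ φ) := hφ.continuous_fderiv one_ne_zero
  obtain ⟨C, hC⟩ := (hφc.fderiv ℝ).exists_bound_of_continuous hφ'
  have hcont : ∀ z, ContinuousOn (fun x ↦ φ (F x - z) * w x) K := fun z ↦
    (hφ.continuous.comp_continuousOn (hF.sub continuousOn_const)).mul hw
  have hcont' : ContinuousOn (fun x ↦ -(w x • fderiv ℝ φ (F x - y))) K :=
    (hw.smul (hφ'.comp_continuousOn (hF.sub continuousOn_const))).neg
  have hbound : ∀ z x, ‖-(w x • fderiv ℝ φ (F x - z))‖ ≤ |w x| * C := fun z x ↦ by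
    rw [norm_neg, norm_smul, Real.norm_eq_abs]
    gcongr
    exact hC _
  have hderiv : ∀ z x, HasFDerivAt (fun z ↦ φ (F x - z) * w x)
      (-(w x • fderiv ℝ φ (F x - z))) z := fun z x ↦ by
    have h := ((hφ.differentiable one_ne_zero (F x - z)).hasFDerivAt.comp z
      ((hasFDerivAt_id z).const_sub (F x))).mul_const (w x)
    refine h.congr_fderiv ?_
    ext v
    simp
  exact hasFDerivAt_integral_of_dominated_of_fderiv_le (F' := fun z x ↦ _) univ_mem
    (.of_forall fun z ↦ ((hcont z).integrableOn_compact hK).aestronglyMeasurable)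
    ((hcont y).integrableOn_compact hK) (hcont'.integrableOn_compact hK).aestronglyMeasurable
    (.of_forall fun x z _ ↦ hbound z x)
    ((hw.abs.mul continuousOn_const).integrableOn_compact hK)
    (.of_forall fun x z _ ↦ hderiv z x)

variable [MeasurableSpace E] (μ : Measure E)

/-- The integral over `Ω` of the pullback `f^*(g dμ)`. If `p` is off `f(∂Ω)` and `g` is
concentrated near `p` with integral one, it is the Brouwer degree of `f` on `Ω` at `p`. -/
noncomputable def degreeIntegral (f : E → E) (Ω : Set E) (g : E → ℝ) : ℝ :=
  ∫ x in Ω, g (f x) * (fderiv ℝ f x).det ∂μ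

variable [FiniteDimensional ℝ E] [BorelSpace E] [μ.IsAddHaarMeasure]

theorem degreeIntegral_fderiv_apply_eq_zero [Nontrivial E] (hΩo : IsOpen Ω)
    (hΩb : Bornology.IsBounded Ω) (hfc : ContinuousOn f (closure Ω)) (hf : ContDiffOn ℝ 1 f Ω)
    {φ : E → ℝ} (hφ : ContDiff ℝ 1 φ) (hsupp : Disjoint (tsupport φ) (f '' frontier Ω)) (v : E) :
    degreeIntegral μ f Ω (fun y ↦ fderiv ℝ φ y v) = 0 := by
  let ψ : E → ℝ := Ω.indicator (φ ∘ f)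
  have hcomp : IsCompact (Ω ∩ f ⁻¹' tsupport φ) :=
    isCompact_inter_preimage_of_disjoint_image_frontier hΩb hfc (isClosed_tsupport φ) hsupp
  have hψsupp : tsupport ψ ⊆ Ω ∩ f ⁻¹' tsupport φ := by
    refine closure_minimal (fun x hx ↦ ?_) hcomp.isClosed
    obtain ⟨hxΩ, hφx⟩ := indicator_apply_ne_zero.1 (mem_support.1 hx)
    exact ⟨hxΩ, subset_tsupport φ hφx⟩
  have hψΩ : tsupport ψ ⊆ Ω := hψsupp.trans inter_subset_left
  have hψ : ContDiff ℝ 1 ψ := contDiff_indicator_of_tsupport_subset hΩo (hφ.comp_contDiffOn hf) hψΩ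
  have hψc : HasCompactSupport ψ := hcomp.of_isClosed_subset (isClosed_tsupport ψ) hψsupp
  have hdet : ∀ x ∈ Ω, (fderiv ℝ (f + fun x ↦ ψ x • v) x).det - (fderiv ℝ f x).det =
      fderiv ℝ φ (f x) v * (fderiv ℝ f x).det := fun x hx ↦ by
    have hfx : HasFDerivAt f (fderiv ℝ f x) x :=
      ((hf.contDiffAt (hΩo.mem_nhds hx)).differentiableAt one_ne_zero).hasFDerivAt
    have hψx : HasFDerivAt ψ ((fderiv ℝ φ (f x)).comp (fderiv ℝ f x)) x :=
      ((hφ.differentiable one_ne_zero (f x)).hasFDerivAt.comp x hfx).congr_of_eventuallyEq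
        (eqOn_indicator.eventuallyEq_of_mem (hΩo.mem_nhds hx))
    rw [(hfx.add (hψx.smul_const v)).fderiv, det_add_smulRight_comp]
    ring
  rw [degreeIntegral, ← setIntegral_congr_fun hΩo.measurableSet hdet]
  exact setIntegral_det_fderiv_add_sub_eq_zero μ hΩo hf (hψ.smul contDiff_const) hψc.smul_right
    ((tsupport_smul_subset_left ψ _).trans hψΩ)

theorem hasFDerivAt_degreeIntegral_comp_sub [Nontrivial E] (hΩo : IsOpen Ω)
    (hΩb : Bornology.IsBounded Ω) (hfc : ContinuousOn f (closure Ω)) (hf : ContDiffOn ℝ 1 f Ω)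
    {φ : E → ℝ} (hφ : ContDiff ℝ 1 φ) (hφc : HasCompactSupport φ) {y : E}
    (hsupp : ∀ x ∈ frontier Ω, f x - y ∉ tsupport φ) :
    HasFDerivAt (fun z ↦ degreeIntegral μ f Ω fun w ↦ φ (w - z)) (0 : E →L[ℝ] ℝ) y := by
  obtain ⟨K, hKΩ, hK, hoff⟩ := exists_isCompact_eventually_sub_notMem_tsupport hΩb hfc hφc hsupp
  have hFK : ContinuousOn f K := hfc.mono (hKΩ.trans subset_closure)
  have hdetK : ContinuousOn (fun x ↦ (fderiv ℝ f x).det) K :=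
    (continuousOn_det_fderiv hΩo hf).mono hKΩ
  have heq : (fun z ↦ degreeIntegral μ f Ω fun w ↦ φ (w - z)) =ᶠ[𝓝 y]
      fun z ↦ ∫ x in K, φ (f x - z) * (fderiv ℝ f x).det ∂μ := by
    filter_upwards [hoff] with z hz
    exact setIntegral_eq_of_subset_of_forall_sdiff_eq_zero hΩo.measurableSet hKΩ fun x hx ↦
      mul_eq_zero_of_left (image_eq_zero_of_notMem_tsupport (hz x hx)) _
  refine ((hasFDerivAt_setIntegral_comp_sub_mul hK hFK hdetK hφ hφc y).congr_of_eventuallyEq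
    heq).congr_fderiv ?_
  have hint : IntegrableOn (fun x ↦ -((fderiv ℝ f x).det • fderiv ℝ φ (f x - y))) K μ :=
    (hdetK.smul ((hφ.continuous_fderiv one_ne_zero).comp_continuousOn
      (hFK.sub continuousOn_const))).neg.integrableOn_compact hK
  have hsupp' : Disjoint (tsupport fun w ↦ φ (w - y)) (f '' frontier Ω) := by
    rw [disjoint_right]
    rintro _ ⟨x, hx, rfl⟩ hw
    exact hsupp x hx (tsupport_comp_subset_preimage φ (continuous_id.sub continuous_const) hw)
  ext v
  calc (∫ x in K, -((fderiv ℝ f x).det • fderiv ℝ φ (f x - y)) ∂μ) v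
      = -∫ x in K, fderiv ℝ φ (f x - y) v * (fderiv ℝ f x).det ∂μ := by
        rw [ContinuousLinearMap.integral_apply hint, ← integral_neg]
        simp [mul_comm]
    _ = -degreeIntegral μ f Ω (fun w ↦ fderiv ℝ (fun w ↦ φ (w - y)) w v) := by
        rw [degreeIntegral, setIntegral_eq_of_subset_of_forall_sdiff_eq_zero hΩo.measurableSet hKΩ]
        · simp only [fderiv_comp_sub]
        · intro x hx
          simp [fderiv_comp_sub, fderiv_of_notMem_tsupport ℝ (hoff.self_of_nhds x hx)]
    _ = 0 := by
        rw [degreeIntegral_fderiv_apply_eq_zero (φ := fun w ↦ φ (w - y)) μ hΩo hΩb hfc hf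
          (hφ.comp (contDiff_id.sub contDiff_const)) hsupp' v, neg_zero]

end DegreeIntegral

section RegularFiber

variable {E : Type*} [NormedAddCommGroup E] [NormedSpace ℝ E] {f : E → E} {Ω : Set E} {p : E}

/-- `U` is one of the open sheets that the inverse function theorem produces over a neighbourhood
of the regular value `f x`. Constancy of the sign of the Jacobian on the sheet is recorded by
`det_eq`. -/
structure IsRegularSheet (f : E → E) (x : E) (U : Set E) : Prop where
  isOpen : IsOpen U
  mem : x ∈ U
  injOn : InjOn f U
  image_mem_nhds : f '' U ∈ 𝓝 (f x)
  differentiableAt : ∀ z ∈ U, DifferentiableAt ℝ f z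
  det_eq : ∀ z ∈ U, (fderiv ℝ f z).det = Real.sign (fderiv ℝ f x).det * |(fderiv ℝ f z).det|

/-- The signed number of points of `Ω` over `p`. The `finsum` is the honest sum only when this
fiber is finite, as it is over a regular value off `f(∂Ω)`. -/
noncomputable def signedFiberCount (f : E → E) (Ω : Set E) (p : E) : ℝ :=
  ∑ᶠ x ∈ Ω ∩ f ⁻¹' {p}, Real.sign (fderiv ℝ f x).det

theorem IsRegularSheet.mul_det_fderiv_eq {x z : E} {U : Set E} (h : IsRegularSheet f x U)
    (hz : z ∈ U) (c : ℝ) : c * (fderiv ℝ f z).det =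
      Real.sign (fderiv ℝ f x).det * |(fderiv ℝ f z).det| • c := by
  conv_lhs => rw [h.det_eq z hz]
  rw [smul_eq_mul]
  ring

variable [FiniteDimensional ℝ E]

theorem exists_isRegularSheet {x : E} {W : Set E} (hf : ContDiffAt ℝ 1 f x)
    (hx : (fderiv ℝ f x).det ≠ 0) (hW : W ∈ 𝓝 x) : ∃ U ⊆ W, IsRegularSheet f x U := by
  let A : E ≃L[ℝ] E := (fderiv ℝ f x).toContinuousLinearEquivOfDetNeZero hx
  have hstrict : HasStrictFDerivAt f (A : E →L[ℝ] E) x := by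
    rw [ContinuousLinearMap.coe_toContinuousLinearEquivOfDetNeZero]
    exact hf.hasStrictFDerivAt one_ne_zero
  let Φ := hstrict.toOpenPartialHomeomorph f
  have hdet : ContinuousAt (fun z ↦ (fderiv ℝ f z).det) x :=
    ContinuousLinearMap.continuous_det.continuousAt.comp (hf.continuousAt_fderiv one_ne_zero)
  have hsign : ∀ᶠ z in 𝓝 x,
      (fderiv ℝ f z).det = Real.sign (fderiv ℝ f x).det * |(fderiv ℝ f z).det| := by
    rcases hx.lt_or_gt with hneg | hpos
    · filter_upwards [hdet.eventually_lt_const hneg] with z hz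
      simp [Real.sign_of_neg hneg, abs_of_neg hz]
    · filter_upwards [hdet.eventually_const_lt hpos] with z hz
      simp [Real.sign_of_pos hpos, abs_of_pos hz]
  have hdiff : ∀ᶠ z in 𝓝 x, DifferentiableAt ℝ f z :=
    (hf.eventually (by simp)).mono fun z hz ↦ hz.differentiableAt one_ne_zero
  have hsource : Φ.source ∈ 𝓝 x :=
    Φ.open_source.mem_nhds hstrict.mem_toOpenPartialHomeomorph_source
  obtain ⟨U, hU, hUo, hxU⟩ := _root_.mem_nhds_iff.1
    (inter_mem (inter_mem hW hsource) (hsign.and hdiff))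
  have hUsource : U ⊆ Φ.source := fun z hz ↦ (hU hz).1.2
  exact ⟨U, fun z hz ↦ (hU hz).1.1,
    { isOpen := hUo
      mem := hxU
      injOn := Φ.injOn.mono hUsource
      image_mem_nhds :=
        (Φ.isOpen_image_of_subset_source hUo hUsource).mem_nhds (mem_image_of_mem f hxU)
      differentiableAt := fun z hz ↦ (hU hz).2.2
      det_eq := fun z hz ↦ (hU hz).2.1 }⟩

theorem finite_inter_preimage_of_det_fderiv_ne_zero (hΩo : IsOpen Ω)
    (hΩb : Bornology.IsBounded Ω) (hfc : ContinuousOn f (closure Ω)) (hf : ContDiffOn ℝ 1 f Ω)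
    (hp : p ∉ f '' frontier Ω) (hreg : ∀ x ∈ Ω ∩ f ⁻¹' {p}, (fderiv ℝ f x).det ≠ 0) :
    (Ω ∩ f ⁻¹' {p}).Finite := by
  refine (isCompact_inter_preimage_of_disjoint_image_frontier hΩb hfc isClosed_singleton
    (disjoint_singleton_left.2 hp)).finite
    (isDiscrete_iff_forall_mem_exists_isOpen.2 fun x hx ↦ ?_)
  obtain ⟨U, -, hU⟩ := exists_isRegularSheet (hf.contDiffAt (hΩo.mem_nhds hx.1)) (hreg x hx)
    univ_mem
  refine ⟨U, hU.isOpen, subset_antisymm ?_ (singleton_subset_iff.2 ⟨hU.mem, hx⟩)⟩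
  rintro z ⟨hzU, -, hz⟩
  exact hU.injOn hzU hU.mem (hz.trans hx.2.symm)

theorem exists_isRegularSheet_cover (hΩo : IsOpen Ω) (hΩb : Bornology.IsBounded Ω)
    (hfc : ContinuousOn f (closure Ω)) (hf : ContDiffOn ℝ 1 f Ω) (hp : p ∉ f '' frontier Ω)
    (hreg : ∀ x ∈ Ω ∩ f ⁻¹' {p}, (fderiv ℝ f x).det ≠ 0) :
    ∃ U : E → Set E, (∀ x ∈ Ω ∩ f ⁻¹' {p}, IsRegularSheet f x (U x) ∧ U x ⊆ Ω) ∧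
      (Ω ∩ f ⁻¹' {p}).PairwiseDisjoint U ∧
      ∀ᶠ y in 𝓝 p, Ω ∩ f ⁻¹' {y} ⊆ ⋃ x ∈ Ω ∩ f ⁻¹' {p}, U x ∧
        ∀ x ∈ Ω ∩ f ⁻¹' {p}, y ∈ f '' U x := by
  have hfin := finite_inter_preimage_of_det_fderiv_ne_zero hΩo hΩb hfc hf hp hreg
  set F : Set E := Ω ∩ f ⁻¹' {p}
  obtain ⟨V, hV, hVdisj⟩ := hfin.t2_separation
  have hsheet : ∀ x ∈ F, ∃ U ⊆ V x ∩ Ω, IsRegularSheet f x U := fun x hx ↦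
    exists_isRegularSheet (hf.contDiffAt (hΩo.mem_nhds hx.1)) (hreg x hx)
      (inter_mem ((hV x).2.mem_nhds (hV x).1) (hΩo.mem_nhds hx.1))
  choose! U hUsub hU using hsheet
  have hK : IsCompact (closure Ω \ ⋃ x ∈ F, U x) :=
    hΩb.isCompact_closure.diff (isOpen_biUnion fun x hx ↦ (hU x hx).isOpen)
  have hpK : p ∉ f '' (closure Ω \ ⋃ x ∈ F, U x) := by
    rintro ⟨x, ⟨hx, hxU⟩, hfx⟩
    by_cases hxΩ : x ∈ Ω
    · exact hxU (mem_biUnion (show x ∈ F from ⟨hxΩ, hfx⟩) (hU x ⟨hxΩ, hfx⟩).mem)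
    · exact hp ⟨x, ⟨hx, fun hi ↦ hxΩ (interior_subset hi)⟩, hfx⟩
  have hfK : IsClosed (f '' (closure Ω \ ⋃ x ∈ F, U x)) :=
    (hK.image_of_continuousOn (hfc.mono sdiff_subset)).isClosed
  refine ⟨U, fun x hx ↦ ⟨hU x hx, (hUsub x hx).trans inter_subset_right⟩,
    fun x hx y hy hxy ↦ (hVdisj hx hy hxy).mono ((hUsub x hx).trans inter_subset_left)
      ((hUsub y hy).trans inter_subset_left), ?_⟩
  filter_upwards [hfK.isOpen_compl.mem_nhds hpK, (biInter_mem hfin).2 fun x hx ↦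
    hx.2 ▸ (hU x hx).image_mem_nhds] with y hyK hyU
  exact ⟨fun x hx ↦ by_contra fun hxU ↦ hyK ⟨x, ⟨subset_closure hx.1, hxU⟩, hx.2⟩,
    mem_iInter₂.1 hyU⟩

variable [MeasurableSpace E] [BorelSpace E] (μ : Measure E) [μ.IsAddHaarMeasure] {g : E → ℝ}

theorem IsRegularSheet.integrableOn {x : E} {U : Set E} (h : IsRegularSheet f x U)
    (hg : Integrable g μ) : IntegrableOn (fun z ↦ g (f z) * (fderiv ℝ f z).det) U μ := by
  have habs : IntegrableOn (fun z ↦ |(fderiv ℝ f z).det| • g (f z)) U μ :=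
    (integrableOn_image_iff_integrableOn_abs_det_fderiv_smul μ h.isOpen.measurableSet
      (fun z hz ↦ (h.differentiableAt z hz).hasFDerivAt.hasFDerivWithinAt) h.injOn g).1
      hg.integrableOn
  exact IntegrableOn.congr_fun (habs.const_mul (Real.sign (fderiv ℝ f x).det))
    (fun z hz ↦ (h.mul_det_fderiv_eq hz _).symm) h.isOpen.measurableSet

theorem IsRegularSheet.degreeIntegral_eq {x : E} {U : Set E} (h : IsRegularSheet f x U)
    (hg : support g ⊆ f '' U) :
    degreeIntegral μ f U g = Real.sign (fderiv ℝ f x).det * ∫ y, g y ∂μ := by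
  have hU : MeasurableSet U := h.isOpen.measurableSet
  calc degreeIntegral μ f U g
      = ∫ z in U, Real.sign (fderiv ℝ f x).det * |(fderiv ℝ f z).det| • g (f z) ∂μ :=
        setIntegral_congr_fun hU fun z hz ↦ h.mul_det_fderiv_eq hz _
    _ = Real.sign (fderiv ℝ f x).det * ∫ y in f '' U, g y ∂μ := by
        rw [integral_const_mul, integral_image_eq_integral_abs_det_fderiv_smul μ hU
          (fun z hz ↦ (h.differentiableAt z hz).hasFDerivAt.hasFDerivWithinAt) h.injOn]
    _ = Real.sign (fderiv ℝ f x).det * ∫ y, g y ∂μ := by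
        rw [setIntegral_eq_integral_of_forall_compl_eq_zero fun y hy ↦
          notMem_support.1 fun hgy ↦ hy (hg hgy)]

theorem exists_degreeIntegral_eq_signedFiberCount_mul (hΩo : IsOpen Ω)
    (hΩb : Bornology.IsBounded Ω) (hfc : ContinuousOn f (closure Ω)) (hf : ContDiffOn ℝ 1 f Ω)
    (hp : p ∉ f '' frontier Ω) (hreg : ∀ x ∈ Ω ∩ f ⁻¹' {p}, (fderiv ℝ f x).det ≠ 0) :
    ∃ ε > 0, ∀ g : E → ℝ, Integrable g μ → support g ⊆ ball p ε →
      degreeIntegral μ f Ω g = signedFiberCount f Ω p * ∫ y, g y ∂μ := by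
  have hfin := finite_inter_preimage_of_det_fderiv_ne_zero hΩo hΩb hfc hf hp hreg
  obtain ⟨U, hU, hdisj, hnear⟩ := exists_isRegularSheet_cover hΩo hΩb hfc hf hp hreg
  obtain ⟨ε, hε, hball⟩ := Metric.eventually_nhds_iff_ball.1 hnear
  refine ⟨ε, hε, fun g hg hgε ↦ ?_⟩
  have hoff : ∀ z ∈ Ω \ ⋃ x ∈ hfin.toFinset, U x, g (f z) * (fderiv ℝ f z).det = 0 := by
    rintro z ⟨hzΩ, hzU⟩
    refine mul_eq_zero_of_left (notMem_support.1 fun hgz ↦ hzU ?_) _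
    simpa only [hfin.mem_toFinset] using (hball (f z) (hgε hgz)).1 ⟨hzΩ, rfl⟩
  have hUΩ : ⋃ x ∈ hfin.toFinset, U x ⊆ Ω :=
    iUnion₂_subset fun x hx ↦ (hU x (hfin.mem_toFinset.1 hx)).2
  calc degreeIntegral μ f Ω g
      = ∫ z in ⋃ x ∈ hfin.toFinset, U x, g (f z) * (fderiv ℝ f z).det ∂μ :=
        setIntegral_eq_of_subset_of_forall_sdiff_eq_zero hΩo.measurableSet hUΩ hoff
    _ = ∑ x ∈ hfin.toFinset, degreeIntegral μ f (U x) g :=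
        integral_biUnion_finset _
          (fun x hx ↦ (hU x (hfin.mem_toFinset.1 hx)).1.isOpen.measurableSet)
          (by rwa [hfin.coe_toFinset])
          (fun x hx ↦ (hU x (hfin.mem_toFinset.1 hx)).1.integrableOn μ hg)
    _ = ∑ x ∈ hfin.toFinset, Real.sign (fderiv ℝ f x).det * ∫ y, g y ∂μ :=
        Finset.sum_congr rfl fun x hx ↦ (hU x (hfin.mem_toFinset.1 hx)).1.degreeIntegral_eq μ
          fun y hy ↦ (hball y (hgε hy)).2 x (hfin.mem_toFinset.1 hx)
    _ = signedFiberCount f Ω p * ∫ y, g y ∂μ := by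
        rw [signedFiberCount, finsum_mem_eq_finite_toFinset_sum _ hfin, Finset.sum_mul]

end RegularFiber

section PathInvariance

theorem exists_joinedIn_compl_cthickening {X : Type*} [PseudoMetricSpace X] {K : Set X}
    (hK : IsClosed K) {p q : X} (hpq : JoinedIn Kᶜ p q) :
    ∃ δ > 0, JoinedIn (cthickening δ K)ᶜ p q := by
  obtain ⟨γ, hγ⟩ := hpq
  have hdisj : Disjoint (range γ) K := disjoint_left.2 (forall_mem_range.2 hγ)
  obtain ⟨δ, hδ, hδd⟩ := hdisj.exists_cthickenings (isCompact_range γ.continuous) hK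
  exact ⟨δ, hδ, γ, fun t ↦ disjoint_left.1 hδd (self_subset_cthickening _ (mem_range_self t))⟩

theorem eq_of_hasFDerivAt_zero_of_joinedIn {E G : Type*} [NormedAddCommGroup E] [NormedSpace ℝ E]
    [NormedAddCommGroup G] [NormedSpace ℝ G] {U : Set E} (hU : IsOpen U) {F : E → G}
    (hF : ∀ y ∈ U, HasFDerivAt F (0 : E →L[ℝ] G) y) {p q : E} (hpq : JoinedIn U p q) :
    F p = F q := by
  have hsub : pathComponentIn U p ⊆ U := pathComponentIn_subset
  exact (hU.pathComponentIn p).is_const_of_fderiv_eq_zero (𝕜 := ℝ)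
    (isPathConnected_pathComponentIn hpq.source_mem).isConnected.isPreconnected
    (fun y hy ↦ (hF y (hsub hy)).differentiableAt.differentiableWithinAt)
    (fun y hy ↦ (hF y (hsub hy)).fderiv) (mem_pathComponentIn_self hpq.source_mem) hpq

variable {E : Type*} [NormedAddCommGroup E] [NormedSpace ℝ E] [FiniteDimensional ℝ E]
  {f : E → E} {Ω : Set E} {p q : E}

theorem exists_degreeIntegral_comp_sub_eq_of_joinedIn [Nontrivial E] [MeasurableSpace E]
    [BorelSpace E] (μ : Measure E) [μ.IsAddHaarMeasure] (hΩo : IsOpen Ω)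
    (hΩb : Bornology.IsBounded Ω) (hfc : ContinuousOn f (closure Ω)) (hf : ContDiffOn ℝ 1 f Ω)
    (hpq : JoinedIn (f '' frontier Ω)ᶜ p q) :
    ∃ δ > 0, ∀ φ : E → ℝ, ContDiff ℝ 1 φ → tsupport φ ⊆ closedBall 0 δ →
      degreeIntegral μ f Ω (fun w ↦ φ (w - p)) = degreeIntegral μ f Ω fun w ↦ φ (w - q) := by
  obtain ⟨δ, hδ, hjoin⟩ :=
    exists_joinedIn_compl_cthickening (isCompact_image_frontier hΩb hfc).isClosed hpq
  refine ⟨δ, hδ, fun φ hφ hφδ ↦ ?_⟩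
  have hφc : HasCompactSupport φ :=
    (isCompact_closedBall 0 δ).of_isClosed_subset (isClosed_tsupport φ) hφδ
  refine eq_of_hasFDerivAt_zero_of_joinedIn
    (F := fun y ↦ degreeIntegral μ f Ω fun w ↦ φ (w - y)) isClosed_cthickening.isOpen_compl
    (fun y hy ↦ hasFDerivAt_degreeIntegral_comp_sub μ hΩo hΩb hfc hf hφ hφc
      fun x hx hxy ↦ hy ?_) hjoin
  refine mem_cthickening_of_dist_le y (f x) δ _ (mem_image_of_mem f hx) ?_
  rw [dist_comm, dist_eq_norm]
  exact mem_closedBall_zero_iff.1 (hφδ hxy)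

theorem signedFiberCount_eq_of_joinedIn (hΩo : IsOpen Ω) (hΩb : Bornology.IsBounded Ω)
    (hfc : ContinuousOn f (closure Ω)) (hf : ContDiffOn ℝ 1 f Ω)
    (hpq : JoinedIn (f '' frontier Ω)ᶜ p q)
    (hregp : ∀ x ∈ Ω ∩ f ⁻¹' {p}, (fderiv ℝ f x).det ≠ 0)
    (hregq : ∀ x ∈ Ω ∩ f ⁻¹' {q}, (fderiv ℝ f x).det ≠ 0) :
    signedFiberCount f Ω p = signedFiberCount f Ω q := by
  rcases subsingleton_or_nontrivial E with hE | hE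
  · rw [Subsingleton.elim p q]
  borelize E
  let μ : Measure E := Measure.addHaar
  obtain ⟨δ, hδ, hconst⟩ := exists_degreeIntegral_comp_sub_eq_of_joinedIn μ hΩo hΩb hfc hf hpq
  obtain ⟨εp, hεp, hcountp⟩ :=
    exists_degreeIntegral_eq_signedFiberCount_mul μ hΩo hΩb hfc hf hpq.source_mem hregp
  obtain ⟨εq, hεq, hcountq⟩ :=
    exists_degreeIntegral_eq_signedFiberCount_mul μ hΩo hΩb hfc hf hpq.target_mem hregq
  let r : ℝ := min δ (min εp εq)
  have hr : 0 < r := by positivity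
  let φ : ContDiffBump (0 : E) := ⟨r / 2, r, half_pos hr, half_lt_self hr⟩
  have hφδ : tsupport φ ⊆ closedBall 0 δ :=
    φ.tsupport_eq.trans_subset (closedBall_subset_closedBall (min_le_left _ _))
  have hint : ∀ y, Integrable (fun w ↦ φ (w - y)) μ := fun y ↦ φ.integrable.comp_sub_right y
  have hsupp : ∀ y ε, r ≤ ε → support (fun w ↦ φ (w - y)) ⊆ ball y ε := fun y ε hε w hw ↦ by
    have hwr : w - y ∈ ball (0 : E) r := φ.support_eq.subset hw
    exact ball_subset_ball hε (by rwa [mem_ball_iff_norm, ← mem_ball_zero_iff])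
  have heq := hconst φ φ.contDiff hφδ
  rw [hcountp _ (hint p) (hsupp p εp ((min_le_right _ _).trans (min_le_left _ _))),
    hcountq _ (hint q) (hsupp q εq ((min_le_right _ _).trans (min_le_right _ _))),
    integral_sub_right_eq_self (fun w ↦ φ w), integral_sub_right_eq_self (fun w ↦ φ w)] at heq
  exact mul_right_cancel₀ φ.integral_pos.ne' heq

theorem degree_constant_on_components_general (hΩo : IsOpen Ω) (hΩb : Bornology.IsBounded Ω)
    (hfc : ContinuousOn f (closure Ω)) (hf : ContDiffOn ℝ 1 f Ω)
    (hpq : JoinedIn (f '' frontier Ω)ᶜ p q)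
    (hreg : ∀ x ∈ Ω, f x = p ∨ f x = q → (fderiv ℝ f x).det ≠ 0) :
    {x | x ∈ Ω ∧ f x = p}.Finite ∧ {x | x ∈ Ω ∧ f x = q}.Finite ∧
    ∑ᶠ x ∈ {x | x ∈ Ω ∧ f x = p}, Real.sign (fderiv ℝ f x).det
      = ∑ᶠ x ∈ {x | x ∈ Ω ∧ f x = q}, Real.sign (fderiv ℝ f x).det := by
  have hregp : ∀ x ∈ Ω ∩ f ⁻¹' {p}, (fderiv ℝ f x).det ≠ 0 := fun x hx ↦ hreg x hx.1 (.inl hx.2)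
  have hregq : ∀ x ∈ Ω ∩ f ⁻¹' {q}, (fderiv ℝ f x).det ≠ 0 := fun x hx ↦ hreg x hx.1 (.inr hx.2)
  exact ⟨finite_inter_preimage_of_det_fderiv_ne_zero hΩo hΩb hfc hf hpq.source_mem hregp,
    finite_inter_preimage_of_det_fderiv_ne_zero hΩo hΩb hfc hf hpq.target_mem hregq,
    signedFiberCount_eq_of_joinedIn hΩo hΩb hfc hf hpq hregp hregq⟩

end PathInvariance

/-- **Constancy of the signed crossing count (degree) on components of the complement of the
boundary image.** For a `C¹` map `f : ℝⁿ → ℝⁿ` and a bounded open set `Ω`, if `p, q` avoid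
`f(∂Ω)`, lie in the same path-component of its complement, and are regular values of `f` on
the closure of `Ω`, then the fibers `f⁻¹{p} ∩ Ω` and `f⁻¹{q} ∩ Ω` are finite and have equal
signed counts `Σ sgn(det Df)`. -/
theorem degree_constant_on_components (n : ℕ) (hn : 1 ≤ n)
    (f : (Fin n → ℝ) → (Fin n → ℝ)) (hf : ContDiff ℝ 1 f)
    (Ω : Set (Fin n → ℝ)) (hΩo : IsOpen Ω) (hΩb : Bornology.IsBounded Ω)
    (p q : Fin n → ℝ)
    (hp : p ∉ f '' frontier Ω) (hq : q ∉ f '' frontier Ω)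
    (hpq : JoinedIn (f '' frontier Ω)ᶜ p q)
    (hreg : ∀ x ∈ closure Ω, f x = p ∨ f x = q → (fderiv ℝ f x).det ≠ 0) :
    {x | x ∈ Ω ∧ f x = p}.Finite ∧ {x | x ∈ Ω ∧ f x = q}.Finite ∧
    ∑ᶠ x ∈ {x | x ∈ Ω ∧ f x = p}, Real.sign (fderiv ℝ f x).det
      = ∑ᶠ x ∈ {x | x ∈ Ω ∧ f x = q}, Real.sign (fderiv ℝ f x).det :=
  degree_constant_on_components_general hΩo hΩb hf.continuous.continuousOn hf.contDiffOn hpq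
    fun x hx ↦ hreg x (subset_closure hx)
end
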